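/- arXiv:1403.3307 — 6 statements merged into one kernel-verified Lean document; each statement's English description precedes it below -/
import Mathlib

section
/- Let n ≥ 2 and let a₁,…,aₙ be nonzero integers with at least one positive and at least one negative. Let A ⊆ ℂ[z₁,…,zₙ,w₁,…,wₙ] be the subalgebra spanned by the monomials z^α w^β with Σᵢ aᵢ(αᵢ − βᵢ) = 0 (the invariants of the ℂˣ-action with weights (a₁,…,aₙ,−a₁,…,−aₙ)), and let f = Σᵢ aᵢ zᵢ wᵢ ∈ A (the complexified moment map). Then the quotient ℂ-algebra A/(f·A) is not isomorphic, as a ℂ-algebra, to a polynomial algebra ℂ[x₁,…,x_k] for any k. -/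
/-!
Statement 1: For n ≥ 2 and nonzero weights with both signs, the invariant algebra
`A ⊆ ℂ[z,w]` of the weighted ℂˣ-action (weights (a, -a)) modulo the ideal generated by the
complexified moment map `f = Σ aᵢ zᵢ wᵢ` is not isomorphic to any polynomial algebra.
-/

namespace Stmt1

open MvPolynomial

/-- The weight of a monomial exponent `d` (variables `Sum.inl i` are `zᵢ` with weight `aᵢ`,
variables `Sum.inr i` are `wᵢ` with weight `-aᵢ`). -/
def wt (n : ℕ) (a : Fin n → ℤ) (d : (Fin n ⊕ Fin n) →₀ ℕ) : ℤ :=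
  ∑ i, a i * ((d (Sum.inl i) : ℤ) - (d (Sum.inr i) : ℤ))

theorem wt_add (n : ℕ) (a : Fin n → ℤ) (d e : (Fin n ⊕ Fin n) →₀ ℕ) :
    wt n a (d + e) = wt n a d + wt n a e := by
  simp only [wt, Finsupp.add_apply]
  rw [← Finset.sum_add_distrib]
  apply Finset.sum_congr rfl
  intro i _
  push_cast
  ring

/-- The subalgebra `A` of `ℂ[z₁,…,zₙ,w₁,…,wₙ]` spanned by the monomials `z^α w^β` with
`Σᵢ aᵢ(αᵢ − βᵢ) = 0`, i.e. the invariants of the ℂˣ-action with weights `(a, -a)`. -/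
noncomputable def A (n : ℕ) (a : Fin n → ℤ) : Subalgebra ℂ (MvPolynomial (Fin n ⊕ Fin n) ℂ) where
  carrier := {p | ∀ d ∈ p.support, wt n a d = 0}
  mul_mem' := by
    intro p q hp hq d hd
    have := MvPolynomial.support_mul p q hd
    rw [Finset.mem_add] at this
    obtain ⟨d₁, hd₁, d₂, hd₂, rfl⟩ := this
    rw [wt_add, hp d₁ hd₁, hq d₂ hd₂, add_zero]
  add_mem' := by
    intro p q hp hq d hd
    rcases Finset.mem_union.mp (MvPolynomial.support_add hd) with h | h
    · exact hp d h
    · exact hq d h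
  one_mem' := by
    intro d hd
    rw [show (1 : MvPolynomial (Fin n ⊕ Fin n) ℂ) = MvPolynomial.monomial 0 1 by
      rw [MvPolynomial.monomial_zero', map_one]] at hd
    have : d = 0 := by simpa using MvPolynomial.support_monomial_subset hd
    subst this
    simp [wt]
  zero_mem' := by
    intro d hd
    simp at hd
  algebraMap_mem' := by
    intro c d hd
    rw [MvPolynomial.algebraMap_eq, MvPolynomial.C_apply] at hd
    have : d = 0 := by simpa using MvPolynomial.support_monomial_subset hd
    subst this
    simp [wt]

/-- The complexified moment map `f = Σᵢ aᵢ zᵢ wᵢ` as a polynomial. -/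
noncomputable def f (n : ℕ) (a : Fin n → ℤ) : MvPolynomial (Fin n ⊕ Fin n) ℂ :=
  ∑ i, MvPolynomial.C (a i : ℂ) * (MvPolynomial.X (Sum.inl i) * MvPolynomial.X (Sum.inr i))

theorem wt_inl (n : ℕ) (a : Fin n → ℤ) (i : Fin n) (m : ℕ) :
    wt n a (Finsupp.single (Sum.inl i) m) = a i * m := by
  classical
  rw [wt, Finset.sum_eq_single i]
  · simp
  · intro b _ hb
    simp [Finsupp.single_apply, Ne.symm hb]
  · simp

theorem wt_inr (n : ℕ) (a : Fin n → ℤ) (i : Fin n) (m : ℕ) :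
    wt n a (Finsupp.single (Sum.inr i) m) = -(a i * m) := by
  classical
  rw [wt, Finset.sum_eq_single i]
  · simp
  · intro b _ hb
    simp [Finsupp.single_apply, Ne.symm hb]
  · simp

/-- The exponent of `zᵢ wᵢ`. -/
noncomputable def ex (n : ℕ) (i : Fin n) : (Fin n ⊕ Fin n) →₀ ℕ :=
  Finsupp.single (Sum.inl i) 1 + Finsupp.single (Sum.inr i) 1

theorem ex_inj (n : ℕ) (i j : Fin n) (h : ex n i = ex n j) : i = j := by
  by_contra hij
  have := DFunLike.congr_fun h (Sum.inl i)
  simp [ex, Finsupp.single_apply, Ne.symm hij] at this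

theorem ex_degree (n : ℕ) (i : Fin n) : (ex n i).degree = 2 := by
  simp [ex]

theorem XX_eq (n : ℕ) (i : Fin n) :
    (X (Sum.inl i) * X (Sum.inr i) : MvPolynomial (Fin n ⊕ Fin n) ℂ) = monomial (ex n i) 1 := by
  simp [ex, X, monomial_mul]

theorem coeff_f (n : ℕ) (a : Fin n → ℤ) (j : Fin n) : coeff (ex n j) (f n a) = a j := by
  classical
  rw [f, coeff_sum, Finset.sum_eq_single j]
  · rw [XX_eq, coeff_C_mul, coeff_monomial, if_pos rfl, mul_one]
  · intro b _ hb
    rw [XX_eq, coeff_C_mul, coeff_monomial, if_neg, mul_zero]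
    exact fun h => hb (ex_inj _ _ _ h)
  · simp

theorem cc_f (n : ℕ) (a : Fin n → ℤ) : constantCoeff (f n a) = 0 := by
  simp [f]

theorem deg_one {σ : Type} (d : σ →₀ ℕ) (h : d.degree = 1) : ∃ x, Finsupp.single x 1 = d := by
  classical
  have hne : d ≠ 0 := by rintro rfl; simp at h
  obtain ⟨x, hx⟩ := Finsupp.ne_iff.mp hne
  have hx1 : Finsupp.single x 1 ≤ d := by
    rw [Finsupp.single_le_iff]
    exact Nat.one_le_iff_ne_zero.mpr hx
  obtain ⟨c, rfl⟩ := exists_add_of_le hx1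
  have : c = 0 := by
    rw [← Finsupp.degree_eq_zero_iff]
    simp at h
    simp [h]
  exact ⟨x, by simp [this]⟩

theorem low_coeff (n : ℕ) (a : Fin n → ℤ) (ha : ∀ i, a i ≠ 0)
    (P : MvPolynomial (Fin n ⊕ Fin n) ℂ) (hP : P ∈ A n a) (h0 : constantCoeff P = 0)
    (d : (Fin n ⊕ Fin n) →₀ ℕ) (hd : d.degree ≤ 1) : coeff d P = 0 := by
  classical
  rcases Nat.le_one_iff_eq_zero_or_eq_one.mp hd with h | h
  · rw [Finsupp.degree_eq_zero_iff] at h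
    subst h
    simpa [constantCoeff_eq] using h0
  · by_contra hne
    have hw : wt n a d = 0 := hP d (mem_support_iff.mpr hne)
    obtain ⟨x, rfl⟩ := deg_one d h
    rcases x with i | i
    · simp [wt, Finsupp.single_apply] at hw
      exact ha i hw
    · simp [wt, Finsupp.single_apply] at hw
      exact ha i hw

theorem mul_coeff (n : ℕ) (a : Fin n → ℤ) (ha : ∀ i, a i ≠ 0)
    (P Q : MvPolynomial (Fin n ⊕ Fin n) ℂ) (hP : P ∈ A n a) (hQ : Q ∈ A n a)
    (hP0 : constantCoeff P = 0) (hQ0 : constantCoeff Q = 0)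
    (d : (Fin n ⊕ Fin n) →₀ ℕ) (hd : d.degree = 2) : coeff d (P * Q) = 0 := by
  classical
  rw [coeff_mul]
  apply Finset.sum_eq_zero
  rintro ⟨x, y⟩ hxy
  rw [Finset.HasAntidiagonal.mem_antidiagonal] at hxy
  have hdeg : x.degree + y.degree = 2 := by rw [← hd, ← hxy, map_add]
  by_cases hx : x.degree ≤ 1
  · rw [low_coeff n a ha P hP hP0 x hx, zero_mul]
  · rw [low_coeff n a ha Q hQ hQ0 y (by omega), mul_zero]

/-- `zᵢ wᵢ` is not in `𝔪² + (f)`. -/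
theorem not_sq (n : ℕ) (a : Fin n → ℤ) (ha : ∀ i, a i ≠ 0) (i j : Fin n) (hij : i ≠ j)
    (P Q G : MvPolynomial (Fin n ⊕ Fin n) ℂ) (hP : P ∈ A n a) (hQ : Q ∈ A n a) (hG : G ∈ A n a)
    (hf : f n a ∈ A n a)
    (hP0 : constantCoeff P = 0) (hQ0 : constantCoeff Q = 0)
    (h : X (Sum.inl i) * X (Sum.inr i) - P * Q = f n a * G) : False := by
  classical
  set g := constantCoeff G with hg
  have hG' : G - C g ∈ A n a := sub_mem hG ((A n a).algebraMap_mem g)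
  have key : ∀ l, coeff (ex n l) (X (Sum.inl i) * X (Sum.inr i) :
      MvPolynomial (Fin n ⊕ Fin n) ℂ) = g * a l := by
    intro l
    have e : (X (Sum.inl i) * X (Sum.inr i) : MvPolynomial (Fin n ⊕ Fin n) ℂ)
        = P * Q + f n a * (G - C g) + C g * f n a := by
      linear_combination h
    rw [e, coeff_add, coeff_add, mul_coeff n a ha P Q hP hQ hP0 hQ0 _ (ex_degree n l),
      mul_coeff n a ha _ _ hf hG' (cc_f n a) (by simp [hg]) _ (ex_degree n l), coeff_C_mul,
      coeff_f]
    ring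
  have hj := key j
  have hi := key i
  rw [XX_eq, coeff_monomial, if_neg (fun h => hij (ex_inj _ _ _ h))] at hj
  rw [XX_eq, coeff_monomial, if_pos rfl] at hi
  have haj : (a j : ℂ) ≠ 0 := by exact_mod_cast ha j
  have : g = 0 := by
    rcases mul_eq_zero.mp hj.symm with h | h
    · exact h
    · exact absurd h haj
  rw [this] at hi
  simp at hi

/-- If `p` divides `s` in the quotient, where `u = p v`, then `v` has zero constant term,
provided some ring map kills `u` and `f` but not `s`. -/
theorem kill (n : ℕ) (a : Fin n → ℤ) (fA s u v c : A n a)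
    (φ : MvPolynomial (Fin n ⊕ Fin n) ℂ →+* MvPolynomial (Fin n ⊕ Fin n) ℂ)
    (hφ : ∀ x, constantCoeff (φ x) = constantCoeff x)
    (hf : φ fA = 0) (hu : φ u = 0) (hs : φ s ≠ 0)
    (h : fA ∣ v * s - u * c) : constantCoeff (v : MvPolynomial (Fin n ⊕ Fin n) ℂ) = 0 := by
  obtain ⟨g, hg⟩ := h
  have := congrArg (fun x : A n a => φ (x : MvPolynomial (Fin n ⊕ Fin n) ℂ)) hg
  simp [hf, hu, hs] at this
  rw [← hφ, this, map_zero]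

theorem mono_mem (n : ℕ) (a : Fin n → ℤ) (d : (Fin n ⊕ Fin n) →₀ ℕ) (hd : wt n a d = 0) :
    monomial d (1 : ℂ) ∈ A n a := by
  intro e he
  have : e = d := by simpa using MvPolynomial.support_monomial_subset he
  rw [this, hd]

/-- The quotient `A/(f·A)` of the invariant algebra by the ideal generated by the
complexified moment map is not a polynomial algebra. -/
theorem quotient_not_polynomial_algebra
    (n : ℕ) (hn : 2 ≤ n) (a : Fin n → ℤ) (ha : ∀ i, a i ≠ 0)
    (hpos : ∃ i, 0 < a i) (hneg : ∃ j, a j < 0)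
    (fA : A n a) (hfA : (fA : MvPolynomial (Fin n ⊕ Fin n) ℂ) = f n a) :
    ¬ ∃ k : ℕ, Nonempty ((A n a ⧸ Ideal.span {fA}) ≃ₐ[ℂ] MvPolynomial (Fin k) ℂ) := by
  classical
  rintro ⟨k, ⟨e⟩⟩
  obtain ⟨i, hi⟩ := hpos
  obtain ⟨j, hj⟩ := hneg
  have hij : i ≠ j := by rintro rfl; omega
  have hfm : f n a ∈ A n a := hfA ▸ fA.2
  haveI : IsDomain (A n a ⧸ Ideal.span {fA}) := e.toMulEquiv.isDomain _
  haveI : UniqueFactorizationMonoid (A n a ⧸ Ideal.span {fA}) :=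
    e.symm.toMulEquiv.uniqueFactorizationMonoid inferInstance
  obtain ⟨p, hp⟩ : ∃ p : ℕ, a i = p + 1 := ⟨(a i - 1).toNat, by omega⟩
  obtain ⟨q, hq⟩ : ∃ q : ℕ, a j = -(q + 1) := ⟨(-a j - 1).toNat, by omega⟩
  -- the invariants
  let U : Fin n → A n a := fun l => ⟨X (Sum.inl l) * X (Sum.inr l), by
    rw [XX_eq]; apply mono_mem; simp [wt, ex, Finsupp.single_apply]⟩
  let s : A n a := ⟨X (Sum.inl i) ^ (q + 1) * X (Sum.inl j) ^ (p + 1), by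
    rw [X_pow_eq_monomial, X_pow_eq_monomial, monomial_mul, one_mul]
    apply mono_mem
    rw [wt_add]
    simp only [wt_inl, wt_inr, hp, hq]
    push_cast
    ring⟩
  let t : A n a := ⟨X (Sum.inr i) ^ (q + 1) * X (Sum.inr j) ^ (p + 1), by
    rw [X_pow_eq_monomial, X_pow_eq_monomial, monomial_mul, one_mul]
    apply mono_mem
    rw [wt_add]
    simp only [wt_inl, wt_inr, hp, hq]
    push_cast
    ring⟩
  have hst : s * t = U i * (U i ^ q * U j ^ (p + 1)) := by
    apply Subtype.ext
    simp [s, t, U]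
    ring
  let π := Ideal.Quotient.mk (Ideal.span {fA})
  have hπ : ∀ x y : A n a, π x = π y → fA ∣ x - y := by
    intro x y h
    exact Ideal.mem_span_singleton.mp (Ideal.Quotient.eq.mp h)
  -- constant term on the quotient
  let ε₀ : A n a →+* ℂ := constantCoeff.comp (A n a).val.toRingHom
  have hε₀ : ∀ x, ε₀ x = constantCoeff (x : MvPolynomial (Fin n ⊕ Fin n) ℂ) := fun _ => rfl
  let ε : (A n a ⧸ Ideal.span {fA}) →+* ℂ := Ideal.Quotient.lift _ ε₀ (by
    intro x hx
    obtain ⟨y, rfl⟩ := Ideal.mem_span_singleton.mp hx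
    rw [map_mul, hε₀ fA, hfA, cc_f, zero_mul])
  have hε : ∀ x, ε (π x) = ε₀ x := fun x => Ideal.Quotient.lift_mk _ _ _
  have hU0 : ε₀ (U i) = 0 := by simp [hε₀, U]
  have hUne : π (U i) ≠ 0 := by
    intro h
    obtain ⟨g, hg⟩ := hπ (U i) 0 (by rw [h, map_zero])
    have hg' := congrArg (Subtype.val) hg
    refine not_sq n a ha i j hij 0 0 g (zero_mem _) (zero_mem _) g.2 hfm (map_zero _) (map_zero _) ?_
    rw [← hfA]
    simpa [U] using hg'
  obtain ⟨F, hF, hFu⟩ := UniqueFactorizationMonoid.exists_prime_factors (π (U i)) (by exact hUne)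
  obtain ⟨b, hbF, hb0⟩ : ∃ b ∈ F, ε b = 0 := by
    have : ε F.prod = 0 := by
      obtain ⟨w, hw⟩ := hFu.symm
      rw [← hw, map_mul, hε, hU0, zero_mul]
    rw [map_multiset_prod, Multiset.prod_eq_zero_iff, Multiset.mem_map] at this
    exact this
  have hbp : Prime b := hF b hbF
  obtain ⟨v', hv'⟩ : b ∣ π (U i) := (Multiset.dvd_prod hbF).trans hFu.dvd
  obtain ⟨P, rfl⟩ := Ideal.Quotient.mk_surjective b
  obtain ⟨V, rfl⟩ := Ideal.Quotient.mk_surjective v'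
  have hP0 : ε₀ P = 0 := by rw [← hε]; exact hb0
  have hV0 : ε₀ V ≠ 0 := by
    intro hV0
    obtain ⟨g, hg⟩ := hπ (U i) (P * V) (by rw [hv', map_mul])
    have hg' := congrArg (Subtype.val) hg
    refine not_sq n a ha i j hij P V g P.2 V.2 g.2 hfm hP0 hV0 ?_
    rw [← hfA]
    simpa [U] using hg'
  have hdvd : π P ∣ π s * π t := by
    rw [← map_mul, hst, map_mul, hv']
    exact Dvd.intro _ (mul_assoc _ _ _).symm
  have conv : ∀ r : A n a, π P ∣ π r → ∃ c, fA ∣ V * r - U i * c := by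
    rintro r ⟨c', hc⟩
    obtain ⟨c, rfl⟩ := Ideal.Quotient.mk_surjective c'
    refine ⟨c, hπ _ _ ?_⟩
    rw [map_mul, map_mul, hc, hv']
    change π V * (π P * π c) = π P * π V * π c
    ring
  rcases hbp.dvd_or_dvd hdvd with h | h
  · obtain ⟨c, hc⟩ := conv s h
    let φ : MvPolynomial (Fin n ⊕ Fin n) ℂ →ₐ[ℂ] MvPolynomial (Fin n ⊕ Fin n) ℂ :=
      aeval (Sum.elim (fun l => X (Sum.inl l)) (fun _ => 0))
    apply hV0
    refine kill n a fA s (U i) V c φ.toRingHom ?_ ?_ ?_ ?_ hc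
    · intro x
      induction x using MvPolynomial.induction_on with
      | C c => simp [φ]
      | add x y hx hy => rw [map_add, map_add, hx, hy, map_add]
      | mul_X x l hx => rw [map_mul, map_mul, hx]; rcases l with l | l <;> simp [φ]
    · simp [hfA, f, φ]
    · simp [U, φ]
    · simp [s, φ]
  · obtain ⟨c, hc⟩ := conv t h
    let φ : MvPolynomial (Fin n ⊕ Fin n) ℂ →ₐ[ℂ] MvPolynomial (Fin n ⊕ Fin n) ℂ :=
      aeval (Sum.elim (fun _ => 0) (fun l => X (Sum.inr l)))
    apply hV0
    refine kill n a fA t (U i) V c φ.toRingHom ?_ ?_ ?_ ?_ hc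
    · intro x
      induction x using MvPolynomial.induction_on with
      | C c => simp [φ]
      | add x y hx hy => rw [map_add, map_add, hx, hy, map_add]
      | mul_X x l hx => rw [map_mul, map_mul, hx]; rcases l with l | l <;> simp [φ]
    · simp [hfA, f, φ]
    · simp [U, φ]
    · simp [t, φ]

end Stmt1
end

section
/- Let n ≥ 4 and let C ⊂ ℝⁿ be a real algebraic set (the common zero locus of finitely many real polynomials) whose Hausdorff dimension is at most n − 4. Then the complement O := ℝⁿ ∖ C is nonempty, path-connected, simply connected, and has trivial second homotopy group; equivalently, the inclusion O → ℝⁿ induces isomorphisms π₀(O) ≅ π₀(ℝⁿ), π₁(O) ≅ π₁(ℝⁿ), and π₂(O) ≅ π₂(ℝⁿ). -/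
namespace Stmt2
open scoped ENNReal
open MeasureTheory Set

lemma pre_prod_le {X : Type*} [EMetricSpace X] (d : ℝ) (hd : 0 < d) (r : ℝ≥0∞)
    (s : Set X) (η : ℝ) (hη : 0 < η) (hη1 : η ≤ 1) (hηr : ENNReal.ofReal η ≤ r)
    (hs : Metric.ediam s ≤ ENNReal.ofReal η) :
    OuterMeasure.mkMetric'.pre (fun u : Set (X × ℝ) => Metric.ediam u ^ (d + 1)) r
      (s ×ˢ Icc (0 : ℝ) 1) ≤ 3 * ENNReal.ofReal η ^ d := by
  set N := ⌈1 / η⌉₊ with hN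
  set μ := OuterMeasure.mkMetric'.pre (fun u : Set (X × ℝ) => Metric.ediam u ^ (d + 1)) r
  have hsub : s ×ˢ Icc (0 : ℝ) 1 ⊆
      ⋃ j ∈ Finset.range (N + 1), s ×ˢ Icc (j * η : ℝ) ((j : ℝ) * η + η) := by
    rintro ⟨a, t⟩ ⟨ha, ht⟩
    simp only [mem_iUnion]
    have h0 : 0 ≤ t / η := div_nonneg ht.1 hη.le
    refine ⟨⌊t / η⌋₊, ?_, ha, ?_, ?_⟩
    · rw [Finset.mem_range, Nat.lt_succ_iff]
      exact (Nat.floor_le_floor (div_le_div_of_nonneg_right ht.2 hη.le)).trans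
        (Nat.floor_le_ceil _)
    · have := Nat.floor_le h0
      rwa [le_div_iff₀ hη] at this
    · have := (Nat.lt_floor_add_one (t / η)).le
      rw [div_le_iff₀ hη] at this
      linarith
  have hdiam : ∀ j : ℕ, Metric.ediam (s ×ˢ Icc (j * η : ℝ) ((j : ℝ) * η + η))
      ≤ ENNReal.ofReal η := by
    intro j
    refine Metric.ediam_le ?_
    rintro ⟨a, t⟩ ⟨ha, ht⟩ ⟨b, u⟩ ⟨hb, hu⟩
    rw [Prod.edist_eq]
    refine max_le ((Metric.edist_le_ediam_of_mem ha hb).trans hs) ?_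
    have := Metric.edist_le_ediam_of_mem ht hu
    rw [Real.ediam_Icc] at this
    simpa using this
  have h1 : ∀ j : ℕ, μ (s ×ˢ Icc (j * η : ℝ) ((j : ℝ) * η + η))
      ≤ ENNReal.ofReal η ^ (d + 1) := fun j =>
    (OuterMeasure.mkMetric'.pre_le ((hdiam j).trans hηr)).trans
      (ENNReal.rpow_le_rpow (hdiam j) (by linarith))
  have hcount : ((N + 1 : ℕ) : ℝ≥0∞) * ENNReal.ofReal η ≤ 3 := by
    rw [← ENNReal.ofReal_natCast, ← ENNReal.ofReal_mul (by positivity)]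
    refine (ENNReal.ofReal_le_ofReal (q := 3) ?_).trans (by simp)
    have h2 : (N : ℝ) < 1 / η + 1 := Nat.ceil_lt_add_one (by positivity)
    have h3 : (N : ℝ) * η ≤ (1 / η + 1) * η := mul_le_mul_of_nonneg_right h2.le hη.le
    have h4 : (1 / η + 1) * η = 1 + η := by field_simp
    push_cast
    nlinarith
  have hη0 : ENNReal.ofReal η ≠ 0 := by simpa using hη
  calc μ (s ×ˢ Icc (0 : ℝ) 1)
      ≤ μ (⋃ j ∈ Finset.range (N + 1), s ×ˢ Icc (j * η : ℝ) ((j : ℝ) * η + η)) :=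
        measure_mono hsub
    _ ≤ ∑ j ∈ Finset.range (N + 1), μ (s ×ˢ Icc (j * η : ℝ) ((j : ℝ) * η + η)) :=
        measure_biUnion_finset_le _ _
    _ ≤ ∑ j ∈ Finset.range (N + 1), ENNReal.ofReal η ^ (d + 1) :=
        Finset.sum_le_sum fun j _ => h1 j
    _ = (((N + 1 : ℕ) : ℝ≥0∞) * ENNReal.ofReal η) * ENNReal.ofReal η ^ d := by
        rw [Finset.sum_const, Finset.card_range, nsmul_eq_mul,
          ENNReal.rpow_add _ _ hη0 ENNReal.ofReal_ne_top, ENNReal.rpow_one]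
        ring
    _ ≤ 3 * ENNReal.ofReal η ^ d := mul_le_mul_left hcount _

lemma pre_prod_le' {X : Type*} [EMetricSpace X] (d : ℝ) (hd : 0 < d) (r : ℝ≥0∞) (hr : 0 < r)
    (s : Set X) (hs : Metric.ediam s ≤ min r 1) :
    OuterMeasure.mkMetric'.pre (fun u : Set (X × ℝ) => Metric.ediam u ^ (d + 1)) r
      (s ×ˢ Icc (0 : ℝ) 1) ≤ 3 * Metric.ediam s ^ d := by
  rcases eq_or_ne (Metric.ediam s) 0 with h0 | h0
  · rw [h0, ENNReal.zero_rpow_of_pos hd, mul_zero]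
    have hlim : Filter.Tendsto (fun η : ℝ => 3 * ENNReal.ofReal η ^ d)
        (nhdsWithin 0 (Ioi 0)) (nhds 0) := by
      have hc : Continuous fun η : ℝ => ENNReal.ofReal η ^ d :=
        (ENNReal.continuous_rpow_const).comp ENNReal.continuous_ofReal
      have := (ENNReal.Tendsto.const_mul (hc.tendsto 0)
        (Or.inr (by norm_num : (3 : ℝ≥0∞) ≠ ⊤))).mono_left
          (nhdsWithin_le_nhds (s := Ioi (0 : ℝ)))
      simpa [ENNReal.zero_rpow_of_pos hd] using this
    refine ge_of_tendsto hlim ?_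
    have e1 : ∀ᶠ η : ℝ in nhdsWithin 0 (Ioi 0), ENNReal.ofReal η < min r 1 := by
      refine nhdsWithin_le_nhds ?_
      refine ENNReal.continuous_ofReal.continuousAt.eventually_lt continuousAt_const ?_
      simpa using hr
    filter_upwards [e1, self_mem_nhdsWithin] with η h1 h2
    refine pre_prod_le d hd r s η h2 ?_ (h1.le.trans (min_le_left _ _)) (by simp [h0])
    have := h1.le.trans (min_le_right _ _)
    rwa [← ENNReal.ofReal_one, ENNReal.ofReal_le_ofReal_iff zero_le_one] at this
  · have hle1 := hs.trans (min_le_right _ _)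
    have htop : Metric.ediam s ≠ ⊤ := ne_top_of_le_ne_top ENNReal.one_ne_top hle1
    have hof := ENNReal.ofReal_toReal htop
    have := pre_prod_le d hd r s (Metric.ediam s).toReal (ENNReal.toReal_pos h0 htop)
      (by simpa using ENNReal.toReal_mono ENNReal.one_ne_top hle1)
      (by rw [hof]; exact hs.trans (min_le_left _ _)) hof.ge
    rwa [hof] at this

lemma hausdorff_prod_Icc {X : Type*} [EMetricSpace X] [MeasurableSpace X] [BorelSpace X]
    [MeasurableSpace (X × ℝ)] [BorelSpace (X × ℝ)]
    (d : ℝ) (hd : 0 < d) (A : Set X) :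
    Measure.hausdorffMeasure (d + 1) (A ×ˢ Icc (0 : ℝ) 1) ≤
      3 * Measure.hausdorffMeasure d A := by
  unfold Measure.hausdorffMeasure
  rw [← OuterMeasure.coe_mkMetric, ← OuterMeasure.coe_mkMetric]
  unfold OuterMeasure.mkMetric OuterMeasure.mkMetric'
  change (⨆ r > 0, OuterMeasure.mkMetric'.pre _ r : OuterMeasure (X × ℝ)) _ ≤
    3 * (OuterMeasure.mkMetric (fun r : ℝ≥0∞ => r ^ d) : OuterMeasure X) A
  simp only [OuterMeasure.iSup_apply, iSup_le_iff]
  intro r hr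
  have key : OuterMeasure.map Prod.fst (OuterMeasure.restrict (univ ×ˢ Icc (0 : ℝ) 1)
      (OuterMeasure.mkMetric'.pre (fun u : Set (X × ℝ) => Metric.ediam u ^ (d + 1)) r)) ≤
      OuterMeasure.mkMetric ((3 : ℝ≥0∞) • fun r : ℝ≥0∞ => r ^ d) := by
    refine OuterMeasure.le_mkMetric _ _ (min r 1) (by simpa using hr) ?_
    intro s hs
    have := pre_prod_le' d hd r hr s hs
    rw [OuterMeasure.map_apply, OuterMeasure.restrict_apply]
    have hset : Prod.fst ⁻¹' s ∩ univ ×ˢ Icc (0 : ℝ) 1 = s ×ˢ Icc (0 : ℝ) 1 := by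
      ext ⟨a, b⟩; simp
    rw [hset]
    exact this
  rw [OuterMeasure.mkMetric_smul _ (by norm_num) (by norm_num)] at key
  have := key A
  rw [OuterMeasure.map_apply, OuterMeasure.restrict_apply] at this
  convert! this using 2
  ext ⟨a, b⟩; simp

lemma dimH_prod_Icc {X : Type*} [EMetricSpace X] (A : Set X) :
    dimH (A ×ˢ Icc (0 : ℝ) 1) ≤ dimH A + 1 := by
  borelize X
  borelize (X × ℝ)
  refine le_of_forall_gt fun c hc => ?_
  obtain ⟨d, h1, h2⟩ := ENNReal.lt_iff_exists_nnreal_btwn.1 (lt_tsub_iff_right.2 hc)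
  have hd : (0 : ℝ) < d := by
    have : (0 : ℝ≥0∞) < d := (zero_le).trans_lt h1
    exact_mod_cast this
  have h0 := hausdorffMeasure_of_dimH_lt h1
  have h3 := hausdorff_prod_Icc (d : ℝ) hd A
  rw [h0, mul_zero] at h3
  have h4 : dimH (A ×ˢ Icc (0 : ℝ) 1) ≤ ((d + 1 : NNReal) : ℝ≥0∞) := by
    refine dimH_le_of_hausdorffMeasure_ne_top ?_
    push_cast
    exact ne_top_of_le_ne_top ENNReal.zero_ne_top h3
  refine h4.trans_lt ?_
  push_cast
  exact lt_tsub_iff_right.1 h2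

lemma dimH_prod_univ {X : Type*} [EMetricSpace X] (A : Set X) :
    dimH (A ×ˢ (univ : Set ℝ)) ≤ dimH A + 1 := by
  have : A ×ˢ (univ : Set ℝ) =
      ⋃ m : ℤ, (fun q : X × ℝ => (q.1, q.2 + m)) '' (A ×ˢ Icc (0 : ℝ) 1) := by
    ext ⟨a, t⟩
    simp only [mem_prod, mem_univ, and_true, mem_iUnion, mem_image, Prod.mk.injEq, Prod.exists]
    constructor
    · intro ha
      exact ⟨⌊t⌋, a, t - ⌊t⌋, ⟨ha, by linarith [Int.floor_le t], by
        linarith [Int.lt_floor_add_one t]⟩, rfl, by ring⟩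
    · rintro ⟨m, b, u, h, rfl, -⟩
      exact h.1
  rw [this, dimH_iUnion]
  refine iSup_le fun m => ?_
  refine le_trans ?_ (dimH_prod_Icc A)
  refine LipschitzWith.dimH_image_le (K := 1) ?_ _
  intro p q
  simp [Prod.edist_eq]

lemma dimH_prod_pi (k : ℕ) : ∀ {X : Type} [EMetricSpace X] (A : Set X),
    dimH (A ×ˢ (univ : Set (Fin k → ℝ))) ≤ dimH A + k := by
  induction k with
  | zero =>
    intro X _ A
    have : A ×ˢ (univ : Set (Fin 0 → ℝ)) = (fun a => (a, fun i => i.elim0)) '' A := by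
      ext ⟨a, t⟩
      simp [Subsingleton.elim t (fun i => i.elim0)]
    rw [this]
    simp only [CharP.cast_eq_zero, add_zero]
    refine LipschitzWith.dimH_image_le (K := 1) ?_ _
    intro p q
    simp [Prod.edist_eq]
  | succ k ih =>
    intro X _ A
    have : A ×ˢ (univ : Set (Fin (k + 1) → ℝ)) =
        (fun q : (X × ℝ) × (Fin k → ℝ) => (q.1.1, (Fin.cons q.1.2 q.2 : Fin (k + 1) → ℝ))) ''
          ((A ×ˢ (univ : Set ℝ)) ×ˢ (univ : Set (Fin k → ℝ))) := by
      ext ⟨a, t⟩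
      simp only [mem_prod, mem_univ, and_true, mem_image, Prod.mk.injEq, Prod.exists]
      constructor
      · intro ha
        exact ⟨a, t 0, Fin.tail t, ha, rfl, Fin.cons_self_tail t⟩
      · rintro ⟨b, u, v, h, rfl, -⟩
        exact h
    rw [this]
    calc _ ≤ dimH ((A ×ˢ (univ : Set ℝ)) ×ˢ (univ : Set (Fin k → ℝ))) := by
          refine LipschitzWith.dimH_image_le (K := 1) ?_ _
          intro p q
          simp only [Prod.edist_eq, ENNReal.coe_one, one_mul]
          refine max_le (le_max_of_le_left (le_max_left _ _)) ?_
          rw [edist_pi_le_iff]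
          intro i
          refine Fin.cases ?_ (fun j => ?_) i
          · exact le_max_of_le_left (le_max_right _ _)
          · exact le_max_of_le_right (edist_le_pi_edist p.2 q.2 j)
      _ ≤ dimH (A ×ˢ (univ : Set ℝ)) + k := ih _
      _ ≤ dimH A + 1 + k := by gcongr; exact dimH_prod_univ A
      _ = dimH A + (k + 1 : ℕ) := by push_cast; ring

/-- A homotopy in the ambient space which avoids `C` gives a homotopy of generalized loops. -/
lemma homotopic_of_ambient {n k : ℕ} {C : Set (Fin n → ℝ)} {x : ↥(Cᶜ)}
    (f g : GenLoop (Fin k) ↥(Cᶜ) x) (F : unitInterval × (Fin k → unitInterval) → (Fin n → ℝ))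
    (hF : Continuous F) (hC : ∀ q, F q ∉ C) (h0 : ∀ s, F (0, s) = f s) (h1 : ∀ s, F (1, s) = g s)
    (hb : ∀ t, ∀ s ∈ Cube.boundary (Fin k), F (t, s) = x) :
    GenLoop.Homotopic f g := by
  refine ⟨⟨⟨⟨fun q => ⟨F q, hC q⟩, by fun_prop⟩, ?_, ?_⟩, ?_⟩⟩
  · intro s; exact Subtype.ext (h0 s)
  · intro s; exact Subtype.ext (h1 s)
  · intro t s hs
    refine Subtype.ext ((hb t s hs).trans ?_)
    exact congrArg Subtype.val (f.2 s hs).symm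

/-- Smooth approximation of a generalized loop, still based at `x`. -/
lemma exists_smooth_approx {n k : ℕ} {C : Set (Fin n → ℝ)} {x : ↥(Cᶜ)}
    (f : GenLoop (Fin k) ↥(Cᶜ) x) (δ : ℝ) (hδ : 0 < δ) :
    ∃ h : (Fin k → ℝ) → (Fin n → ℝ), ContDiff ℝ 1 h ∧
      (∀ s : Fin k → unitInterval, dist (h fun i => (s i : ℝ)) (f s) < δ) ∧
      (∀ s ∈ Cube.boundary (Fin k), h (fun i => (s i : ℝ)) = x) := by
  set e : (Fin k → ℝ) → (Fin n → ℝ) :=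
    fun s => (f (fun i => projIcc (0 : ℝ) 1 zero_le_one (s i)) : Fin n → ℝ) with he
  have heu : UniformContinuous e := by
    have h1 : UniformContinuous fun s : Fin k → unitInterval => ((f s : ↥(Cᶜ)) : Fin n → ℝ) := by
      refine CompactSpace.uniformContinuous_of_continuous ?_
      exact continuous_subtype_val.comp f.1.continuous
    refine h1.comp ?_
    rw [uniformContinuous_pi]
    intro i
    exact (LipschitzWith.projIcc _).uniformContinuous.comp (Pi.uniformContinuous_proj _ i)
  have hee : ∀ s : Fin k → unitInterval, e (fun i => (s i : ℝ)) = f s := by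
    intro s; simp [he]
  set ε := δ / 4 with hε
  have hε0 : 0 < ε := by positivity
  obtain ⟨g, hg, hgd⟩ := heu.exists_contDiff_dist_le hε0
  set φ : ℝ → ℝ := fun v => v * Real.smoothTransition (v ^ 2 / ε ^ 2 - 1) with hφ
  have hφc : ContDiff ℝ 1 φ := by
    refine contDiff_id.mul (Real.smoothTransition.contDiff.comp ?_)
    fun_prop
  have hφ0 : ∀ v, |v| ≤ ε → φ v = 0 := by
    intro v hv
    have : v ^ 2 / ε ^ 2 - 1 ≤ 0 := by
      rw [sub_nonpos, div_le_one (by positivity)]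
      exact sq_le_sq' (by linarith [abs_le.1 hv]) (abs_le.1 hv).2
    simp [hφ, Real.smoothTransition.zero_of_nonpos this]
  have hφd : ∀ v, |φ v - v| ≤ 2 * ε := by
    intro v
    have h01 : 0 ≤ Real.smoothTransition (v ^ 2 / ε ^ 2 - 1) := Real.smoothTransition.nonneg _
    have h02 : Real.smoothTransition (v ^ 2 / ε ^ 2 - 1) ≤ 1 := Real.smoothTransition.le_one _
    rcases le_total (|v|) (2 * ε) with hv | hv
    · have : φ v - v = v * (Real.smoothTransition (v ^ 2 / ε ^ 2 - 1) - 1) := by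
        simp only [hφ]; ring
      rw [this, abs_mul]
      have h3 : |Real.smoothTransition (v ^ 2 / ε ^ 2 - 1) - 1| ≤ 1 := by
        rw [abs_le]; constructor <;> linarith
      exact (mul_le_of_le_one_right (abs_nonneg v) h3).trans hv
    · have : 1 ≤ v ^ 2 / ε ^ 2 - 1 := by
        rw [le_sub_iff_add_le, le_div_iff₀ (by positivity), ← sq_abs v]
        nlinarith
      simp only [hφ, Real.smoothTransition.one_of_one_le this]
      simp [hε0.le]
  refine ⟨fun s i => (x : Fin n → ℝ) i + φ (g s i - (x : Fin n → ℝ) i), ?_, ?_, ?_⟩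
  · rw [contDiff_pi]
    intro i
    have hgi : ContDiff ℝ 1 fun s => g s i := (contDiff_pi.1 (hg.of_le (by simp))) i
    exact contDiff_const.add (hφc.comp (hgi.sub contDiff_const))
  · intro s
    rw [← hee s, dist_pi_lt_iff hδ]
    intro i
    have h1 := (dist_le_pi_dist _ _ i).trans_lt (hgd (fun i => (s i : ℝ)))
    have h2 := hφd (g (fun i => (s i : ℝ)) i - (x : Fin n → ℝ) i)
    rw [Real.dist_eq] at h1 ⊢
    rw [abs_lt] at h1 ⊢
    rw [abs_le] at h2
    constructor <;> linarith [h1.1, h1.2, h2.1, h2.2]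
  · intro s hs
    funext i
    have h1 := (dist_le_pi_dist _ _ i).trans_lt (hgd (fun i => (s i : ℝ)))
    have hfs : f s = x := f.2 s hs
    rw [hee s, hfs, Real.dist_eq] at h1
    simp [hφ0 _ h1.le]

lemma genLoop_null {n k : ℕ} {C : Set (Fin n → ℝ)} (hcl : IsClosed C)
    (hdim : dimH C + k + 1 < n) (x : ↥(Cᶜ)) (f : GenLoop (Fin k) ↥(Cᶜ) x) :
    GenLoop.Homotopic f GenLoop.const := by
  have hcont : Continuous fun s : Fin k → unitInterval => ((f s : ↥(Cᶜ)) : Fin n → ℝ) :=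
    continuous_subtype_val.comp f.1.continuous
  obtain ⟨δ, hδ, hsub⟩ := (isCompact_range hcont).exists_thickening_subset_open
    hcl.isOpen_compl (by rintro _ ⟨s, rfl⟩; exact (f s).2)
  have hball : ∀ s y, dist y ((f s : ↥(Cᶜ)) : Fin n → ℝ) < δ → y ∉ C := fun s y hy =>
    hsub (Metric.mem_thickening_iff.2 ⟨_, ⟨s, rfl⟩, hy⟩)
  obtain ⟨h, hh, hhd, hhb⟩ := exists_smooth_approx f δ hδ
  have hhc := hh.continuous
  let g : GenLoop (Fin k) ↥(Cᶜ) x :=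
    ⟨⟨fun s => ⟨h (fun i => (s i : ℝ)), hball s _ (hhd s)⟩, by fun_prop⟩,
      fun s hs => Subtype.ext (hhb s hs)⟩
  have step1 : GenLoop.Homotopic f g := by
    refine homotopic_of_ambient f g (fun q => ((f q.2 : ↥(Cᶜ)) : Fin n → ℝ) +
      (q.1 : ℝ) • (h (fun i => (q.2 i : ℝ)) - ((f q.2 : ↥(Cᶜ)) : Fin n → ℝ))) ?_ ?_ ?_ ?_ ?_
    · have := hcont.comp (continuous_snd (X := unitInterval))
      simp only [Function.comp_def] at this
      fun_prop
    · rintro ⟨t, s⟩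
      refine hball s _ ?_
      have h1 := hhd s
      rw [dist_eq_norm] at h1 ⊢
      simp only [add_sub_cancel_left, norm_smul]
      refine lt_of_le_of_lt (mul_le_of_le_one_left (norm_nonneg _) ?_) h1
      rw [Real.norm_eq_abs, abs_of_nonneg t.2.1]
      exact t.2.2
    · intro s; simp
    · intro s; simp; rfl
    · intro t s hs
      have : f s = x := f.2 s hs
      simp [hhb s hs, this]
  have step2 : GenLoop.Homotopic g GenLoop.const := by
    let b : (Fin k → ℝ) × ℝ → ℝ := fun q => (q.2 * (1 - q.2)) * ∏ i, (q.1 i * (1 - q.1 i))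
    have hb : ContDiff ℝ 1 b := by
      refine ContDiff.mul (by fun_prop) (contDiff_prod fun i _ => ?_)
      fun_prop
    let base : (Fin k → ℝ) × ℝ → (Fin n → ℝ) := fun q =>
      (1 - q.2) • h q.1 + q.2 • (x : Fin n → ℝ)
    have hbase : ContDiff ℝ 1 base := by
      have : ContDiff ℝ 1 fun q : (Fin k → ℝ) × ℝ => h q.1 := hh.comp contDiff_fst
      fun_prop
    let Φ : ((Fin n → ℝ) × (Fin k → ℝ)) × ℝ → (Fin n → ℝ) := fun q =>
      (b (q.1.2, q.2))⁻¹ • (q.1.1 - base (q.1.2, q.2))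
    let D : Set (((Fin n → ℝ) × (Fin k → ℝ)) × ℝ) :=
      {q | q ∈ (C ×ˢ (univ : Set (Fin k → ℝ))) ×ˢ (univ : Set ℝ) ∧ b (q.1.2, q.2) ≠ 0}
    have hD : dimH (Φ '' D) < n := by
      refine lt_of_le_of_lt ?_ hdim
      calc dimH (Φ '' D) ≤ dimH D := by
            refine dimH_image_le_of_locally_lipschitzOn fun q hq => ?_
            have : ContDiffAt ℝ 1 Φ q := by
              have e1 : ContDiff ℝ 1 fun q : ((Fin n → ℝ) × (Fin k → ℝ)) × ℝ => (q.1.2, q.2) := by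
                fun_prop
              refine ContDiffAt.smul (ContDiffAt.inv (hb.comp e1).contDiffAt hq.2) ?_
              refine ContDiffAt.sub (by fun_prop) (hbase.comp e1).contDiffAt
            obtain ⟨K, t, ht, hK⟩ := this.exists_lipschitzOnWith
            exact ⟨K, t, mem_nhdsWithin_of_mem_nhds ht, hK⟩
        _ ≤ dimH ((C ×ˢ (univ : Set (Fin k → ℝ))) ×ˢ (univ : Set ℝ)) :=
            dimH_mono fun q hq => hq.1
        _ ≤ dimH (C ×ˢ (univ : Set (Fin k → ℝ))) + 1 := dimH_prod_univ _
        _ ≤ dimH C + k + 1 := by gcongr; exact dimH_prod_pi k C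
    obtain ⟨p, hp⟩ : ∃ p, p ∈ (Φ '' D)ᶜ :=
      (dense_compl_of_dimH_lt_finrank (by simpa using hD)).nonempty
    have hbc := hb.continuous
    have hbasec := hbase.continuous
    have hb0 : ∀ s ∈ Cube.boundary (Fin k), ∀ t, b ((fun i => (s i : ℝ)), t) = 0 := by
      rintro s ⟨i, hi⟩ t
      simp only [b]
      refine mul_eq_zero_of_right _ (Finset.prod_eq_zero (Finset.mem_univ i) ?_)
      rcases hi with hi | hi <;> simp [hi]
    have hbase0 : ∀ s ∈ Cube.boundary (Fin k), ∀ t, base ((fun i => (s i : ℝ)), t) = x := by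
      intro s hs t
      simp only [base, hhb s hs]
      rw [← add_smul]; simp
    refine homotopic_of_ambient g _ (fun q => base ((fun i => (q.2 i : ℝ)), (q.1 : ℝ)) +
      b ((fun i => (q.2 i : ℝ)), (q.1 : ℝ)) • p) ?_ ?_ ?_ ?_ ?_
    · fun_prop
    · rintro ⟨t, s⟩ hmem
      by_cases hz : b ((fun i => (s i : ℝ)), (t : ℝ)) = 0
      · simp only [hz, zero_smul, add_zero] at hmem
        have hz' := hz
        simp only [b, mul_eq_zero, Finset.prod_eq_zero_iff, Finset.mem_univ, true_and] at hz'
        rcases hz' with (h0 | h0) | ⟨i, hi⟩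
        · simp only [base, h0, sub_zero, one_smul, zero_smul, add_zero] at hmem
          exact hball s _ (hhd s) hmem
        · have : (t : ℝ) = 1 := by linarith
          simp only [base, this, sub_self, one_smul, zero_smul, zero_add] at hmem
          exact x.2 hmem
        · have hs : s ∈ Cube.boundary (Fin k) := by
            refine ⟨i, ?_⟩
            rcases hi with hi | hi
            · exact Or.inl (Subtype.ext hi)
            · exact Or.inr (Subtype.ext (sub_eq_zero.1 hi).symm)
          rw [hbase0 s hs] at hmem
          exact x.2 hmem
      · refine hp ⟨((base ((fun i => (s i : ℝ)), (t : ℝ)) +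
          b ((fun i => (s i : ℝ)), (t : ℝ)) • p, fun i => (s i : ℝ)), (t : ℝ)), ⟨⟨⟨hmem, mem_univ _⟩, mem_univ _⟩, hz⟩, ?_⟩
        simp only [Φ, add_sub_cancel_left]
        rw [smul_smul, inv_mul_cancel₀ hz, one_smul]
    · intro s; simp [base, b]; rfl
    · intro s; simp [base, b]
    · intro t s hs
      simp [hb0 s hs, hbase0 s hs]
  exact step1.trans step2

lemma homotopyGroup_trivial {n k : ℕ} {C : Set (Fin n → ℝ)} (hcl : IsClosed C)
    (hdim : dimH C + k + 1 < n) (x : ↥(Cᶜ)) : Subsingleton (HomotopyGroup (Fin k) ↥(Cᶜ) x) := by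
  refine ⟨fun a b => ?_⟩
  refine Quotient.inductionOn₂ a b fun f g => Quotient.sound ?_
  exact (genLoop_null hcl hdim x f).trans (genLoop_null hcl hdim x g).symm

theorem complement_of_small_algebraic_set_highly_connected
    (n : ℕ) (hn : 4 ≤ n) (C : Set (Fin n → ℝ))
    (halg : ∃ S : Finset (MvPolynomial (Fin n) ℝ),
      C = {x | ∀ p ∈ S, MvPolynomial.eval x p = 0})
    (hdim : dimH C ≤ ((n - 4 : ℕ) : ℝ≥0∞)) :
    (Cᶜ).Nonempty ∧ IsPathConnected Cᶜ ∧ SimplyConnectedSpace ↥(Cᶜ) ∧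
      ∀ x : ↥(Cᶜ), Subsingleton (HomotopyGroup (Fin 2) ↥(Cᶜ) x) := by
  have hcl : IsClosed C := by
    obtain ⟨S, rfl⟩ := halg
    simp only [ofPred_forall]
    refine isClosed_iInter fun p => isClosed_iInter fun _ => ?_
    exact isClosed_eq (MvPolynomial.continuous_eval p) continuous_const
  have hk : ∀ k : ℕ, k ≤ 2 → dimH C + k + 1 < n := by
    intro k hk
    calc dimH C + k + 1 ≤ ((n - 4 : ℕ) : ℝ≥0∞) + k + 1 := by gcongr
      _ = ((n - 4 + k + 1 : ℕ) : ℝ≥0∞) := by push_cast; rfl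
      _ < n := by exact_mod_cast (by omega : n - 4 + k + 1 < n)
  have hne : (Cᶜ).Nonempty := by
    refine (dense_compl_of_dimH_lt_finrank ?_).nonempty
    have := hk 0 (by omega)
    simp only [Module.finrank_fin_fun]
    refine lt_of_le_of_lt ?_ this
    rw [add_assoc]
    exact le_self_add
  obtain ⟨x₀, hx₀⟩ := hne
  have hpc : PathConnectedSpace ↥(Cᶜ) := by
    rw [pathConnectedSpace_iff_zerothHomotopy]
    have := homotopyGroup_trivial hcl (hk 0 (by omega)) ⟨x₀, hx₀⟩
    exact ⟨⟨Quotient.mk _ ⟨x₀, hx₀⟩⟩,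
      (HomotopyGroup.pi0EquivZerothHomotopy (x := (⟨x₀, hx₀⟩ : ↥(Cᶜ)))).symm.subsingleton⟩
  refine ⟨⟨x₀, hx₀⟩, isPathConnected_iff_pathConnectedSpace.2 hpc, ?_,
    fun x => homotopyGroup_trivial hcl (hk 2 le_rfl) x⟩
  rw [simply_connected_iff_loops_nullhomotopic]
  refine ⟨hpc, fun x γ => ?_⟩
  have := homotopyGroup_trivial hcl (hk 1 (by omega)) x
  have hs : Subsingleton (FundamentalGroup ↥(Cᶜ) x) :=
    HomotopyGroup.pi1EquivFundamentalGroup.symm.subsingleton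
  have hs' : Subsingleton (Path.Homotopic.Quotient x x) := hs
  exact Quotient.exact (hs'.elim (Quotient.mk _ γ) (Quotient.mk _ (Path.refl x)))

end Stmt2
end

section
/- Let H be a finite group and ρ : H → U(m) a faithful unitary representation on ℂᵐ (m ≥ 1). Let H act on ℂᵐ × ℂᵐ by h·(z,w) = (ρ(h)z, \overline{ρ(h)}w), where \overline{ρ(h)} is the entrywise complex conjugate matrix (the dual representation on the second factor). Then the set of points of ℂᵐ × ℂᵐ with nontrivial stabilizer in H equals the union over h ≠ 1 of the fixed-point sets Fix(h) = {(z,w) : h·(z,w) = (z,w)}, each of which is a complex-linear subspace of ℂ^{2m} of complex codimension at least 2. Consequently, the free locus F := {(z,w) : the stabilizer of (z,w) in H is trivial} is open, dense, path-connected, and simply connected. -/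
namespace Stmt3

/-- The action of `h` on `ℂᵐ × ℂᵐ`: `ρ(h)` on the first factor and its entrywise complex
conjugate (the dual representation) on the second. -/
noncomputable def act (m : ℕ) {H : Type} [Group H] (ρ : H →* Matrix.unitaryGroup (Fin m) ℂ)
    (h : H) (x : (Fin m → ℂ) × (Fin m → ℂ)) : (Fin m → ℂ) × (Fin m → ℂ) :=
  (Matrix.mulVec (ρ h : Matrix (Fin m) (Fin m) ℂ) x.1,
   Matrix.mulVec ((ρ h : Matrix (Fin m) (Fin m) ℂ).map (starRingEnd ℂ)) x.2)

/-- The fixed-point set of `h`. -/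
def Fix (m : ℕ) {H : Type} [Group H] (ρ : H →* Matrix.unitaryGroup (Fin m) ℂ)
    (h : H) : Set ((Fin m → ℂ) × (Fin m → ℂ)) :=
  {x | act m ρ h x = x}

/-- The free locus: points with trivial stabilizer in `H`. -/
def F (m : ℕ) {H : Type} [Group H] (ρ : H →* Matrix.unitaryGroup (Fin m) ℂ) :
    Set ((Fin m → ℂ) × (Fin m → ℂ)) :=
  {x | ∀ h : H, act m ρ h x = x → h = 1}



open unitInterval in
/-- A loop that is freely homotopic (through loops) to a constant loop is nullhomotopic. -/
lemma null_of_free {X : Type*} [TopologicalSpace X] {a q : X} (γ : Path a a)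
    (F : γ.toContinuousMap.Homotopy (ContinuousMap.const I q))
    (hend : ∀ t, F (t, 0) = F (t, 1)) : γ.Homotopic (Path.refl a) := by
  have key := Path.Homotopic.map_trans_evalAt F unitInterval.path01
  let τ : Path a q := (F.evalAt 0).cast (by simp) (by simp)
  have key2 : (γ.trans τ).Homotopic (τ.trans (Path.refl q)) := by
    obtain ⟨K⟩ := key
    have K2 := K.pathCast (x' := a) (y' := q) (by simp) (by simp)
    refine ⟨K2.cast ?_ ?_⟩
    · ext t
      refine Eq.trans (b := ((unitInterval.path01.map (map_continuous γ.toContinuousMap)).trans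
        (F.evalAt 1)) t) rfl ?_
      rw [Path.trans_apply, Path.trans_apply]
      split_ifs
      · rfl
      · exact (hend _).symm
    · ext t
      refine Eq.trans (b := ((F.evalAt 0).trans (unitInterval.path01.map
        (map_continuous (ContinuousMap.const I q)))) t) rfl ?_
      rw [Path.trans_apply, Path.trans_apply]
      split_ifs
      · rfl
      · rfl
  have e : Path.Homotopic.Quotient.trans (Path.Homotopic.Quotient.mk γ) (Path.Homotopic.Quotient.mk τ)
      = Path.Homotopic.Quotient.mk τ := by
    have h1 := Path.Homotopic.Quotient.eq.2 key2
    have h2 := Path.Homotopic.Quotient.eq.2 ⟨Path.Homotopy.transRefl τ⟩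
    exact h1.trans h2
  apply Path.Homotopic.Quotient.eq.1
  have h3 := congrArg (fun z => Path.Homotopic.Quotient.trans z
    (Path.Homotopic.Quotient.symm (Path.Homotopic.Quotient.mk τ))) e
  simpa using h3

section general

variable {E : Type*} [NormedAddCommGroup E] [NormedSpace ℝ E] [FiniteDimensional ℝ E]
  {ι : Type*} [Finite ι] (S : ι → Submodule ℝ E)

lemma exists_cone_pt (hS : ∀ i, Module.finrank ℝ (S i) + 2 < Module.finrank ℝ E)
    (hE : 0 < Module.finrank ℝ E)
    (p : ℝ → E) (hp : ContDiff ℝ 1 p) :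
    Dense {q : E | ∀ i, ∀ x ∈ S i, ∀ c s : ℝ, q ≠ x + c • p s} := by
  let f : ∀ i, (S i × ℝ × ℝ) → E := fun i z => (z.1 : E) + z.2.1 • p z.2.2
  have hf : ∀ i, ContDiff ℝ 1 (f i) := by
    intro i
    have h1 : ContDiff ℝ 1 (fun z : S i × ℝ × ℝ => (z.1 : E)) :=
      (S i).subtypeL.contDiff.comp contDiff_fst
    exact h1.add ((contDiff_fst.comp contDiff_snd).smul (hp.comp (contDiff_snd.comp contDiff_snd)))
  have hd : dimH (⋃ i, Set.range (f i)) < Module.finrank ℝ E := by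
    rw [← Set.biUnion_univ, dimH_bUnion Set.countable_univ]
    have : (Set.univ : Set ι).Finite := Set.toFinite _
    rw [show (⨆ i ∈ (Set.univ : Set ι), dimH (Set.range (f i)))
      = this.toFinset.sup (fun i => dimH (Set.range (f i))) by
        rw [Finset.sup_eq_iSup]; simp]
    rw [Finset.sup_lt_iff (by simpa using hE)]
    intro i _
    refine (hf i).dimH_range_le.trans_lt ?_
    have := hS i
    have e : Module.finrank ℝ (S i × ℝ × ℝ) = Module.finrank ℝ (S i) + 2 := by
      simp [Module.finrank_prod]
    rw [e]
    exact_mod_cast this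
  refine (dense_compl_of_dimH_lt_finrank hd).mono ?_
  intro q hq i x hx c s h
  apply hq
  exact Set.mem_iUnion.2 ⟨i, ⟨⟨x, hx⟩, c, s⟩, h.symm⟩

lemma cone_mem {q y : E} {i : ι} (hy : y ∉ S i) (hq : ∀ x ∈ S i, ∀ c : ℝ, q ≠ x + c • y)
    (t : ℝ) : (1 - t) • y + t • q ∉ S i := by
  intro h
  by_cases ht : t = 0
  · subst ht; simp at h; exact hy h
  · refine hq _ ((S i).smul_mem t⁻¹ h) (-(t⁻¹ * (1 - t))) ?_
    rw [smul_add, smul_smul, smul_smul, inv_mul_cancel₀ ht, neg_smul]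
    module

lemma isOpen_U : IsOpen {x : E | ∀ i, x ∉ S i} := by
  have : {x : E | ∀ i, x ∉ S i} = ⋂ i, ((S i : Set E))ᶜ := by ext; simp
  rw [this]
  exact isOpen_iInter_of_finite fun i => (S i).closed_of_finiteDimensional.isOpen_compl

lemma dense_U (hS : ∀ i, Module.finrank ℝ (S i) + 2 < Module.finrank ℝ E)
    (hE : 0 < Module.finrank ℝ E) : Dense {x : E | ∀ i, x ∉ S i} := by
  refine (exists_cone_pt S hS hE (fun _ => 0) contDiff_const).mono ?_
  intro q hq i hi
  exact hq i q hi 0 0 (by simp)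

lemma pathConn_U (hS : ∀ i, Module.finrank ℝ (S i) + 2 < Module.finrank ℝ E)
    (hE : 0 < Module.finrank ℝ E) : IsPathConnected {x : E | ∀ i, x ∉ S i} := by
  rw [isPathConnected_iff]
  refine ⟨(dense_U S hS hE).nonempty, fun a ha b hb => ?_⟩
  obtain ⟨q, hq⟩ := (exists_cone_pt S hS hE (fun s => (1 - s) • a + s • b)
    (by fun_prop)).nonempty
  have hseg : ∀ y, (∀ i, y ∉ S i) → (∀ i, ∀ x ∈ S i, ∀ c : ℝ, q ≠ x + c • y) →
      JoinedIn {x : E | ∀ i, x ∉ S i} y q := by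
    intro y hy hqy
    refine JoinedIn.of_segment_subset ?_
    rintro z ⟨u, v, hu, hv, huv, rfl⟩ i
    have := cone_mem S (hy i) (hqy i) v
    rwa [show 1 - v = u by linarith] at this
  refine (hseg a ha ?_).trans (hseg b hb ?_).symm
  · intro i x hx c h
    exact hq i x hx c 0 (by simpa using h)
  · intro i x hx c h
    exact hq i x hx c 1 (by simpa using h)

open unitInterval in
lemma simplyConn_U (hS : ∀ i, Module.finrank ℝ (S i) + 2 < Module.finrank ℝ E)
    (hE : 0 < Module.finrank ℝ E) : SimplyConnectedSpace {x : E | ∀ i, x ∉ S i} := by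
  rw [simply_connected_iff_loops_nullhomotopic]
  refine ⟨isPathConnected_iff_pathConnectedSpace.1 (pathConn_U S hS hE), ?_⟩
  set U : Set E := {x : E | ∀ i, x ∉ S i} with hU
  intro a γ
  -- the loop as a map into E
  let g : C(I, E) := ⟨fun t => (γ t : E), by fun_prop⟩
  have hK : IsCompact (Set.range g) := isCompact_range g.continuous
  obtain ⟨ε, hε, hth⟩ := hK.exists_thickening_subset_open (isOpen_U S)
    (by rintro _ ⟨t, rfl⟩; exact (γ t).2)
  obtain ⟨n, hn0, hn⟩ : ∃ n : ℕ, n ≠ 0 ∧ dist (bernsteinApproximation n g) g < ε := by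
    have h1 := (bernsteinApproximation_uniform g).eventually (Metric.ball_mem_nhds g hε)
    obtain ⟨n, h2, h3⟩ := (h1.and (Filter.eventually_ne_atTop 0)).exists
    exact ⟨n, h3, h2⟩
  set b := bernsteinApproximation n g with hb
  let p : ℝ → E := fun s => ∑ k : Fin (n + 1),
    ((n.choose k : ℝ) * s ^ (k : ℕ) * (1 - s) ^ (n - k)) • g (bernstein.z k)
  have hp : ContDiff ℝ 1 p := by fun_prop
  have hpb : ∀ s : I, b s = p s := by
    intro s
    simp [hb, bernsteinApproximation.apply, p, bernstein_apply]
  have hb0 : b 0 = a := by simp [hb, g]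
  have hb1 : b 1 = a := by simp [hb, hn0, g]
  -- straight line homotopy
  have hline : ∀ t s : I, (1 - (t : ℝ)) • g s + (t : ℝ) • b s ∈ U := by
    intro t s
    apply hth
    rw [Metric.mem_thickening_iff]
    refine ⟨g s, ⟨s, rfl⟩, ?_⟩
    have h1 : dist (b s) (g s) < ε := (ContinuousMap.dist_apply_le_dist s).trans_lt hn
    rw [dist_eq_norm] at h1 ⊢
    rw [show (1 - (t : ℝ)) • g s + (t : ℝ) • b s - g s = (t : ℝ) • (b s - g s) by module,
      norm_smul, Real.norm_of_nonneg t.2.1]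
    exact (mul_le_of_le_one_left (norm_nonneg _) t.2.2).trans_lt h1
  have hbU : ∀ s, b s ∈ U := fun s => by simpa using hline 1 s
  let β : Path a a :=
    { toFun := fun s => ⟨b s, hbU s⟩
      continuous_toFun := by fun_prop
      source' := Subtype.ext hb0
      target' := Subtype.ext hb1 }
  have H1 : γ.Homotopic β := by
    refine ⟨{ toFun := fun z => ⟨(1 - (z.1 : ℝ)) • g z.2 + (z.1 : ℝ) • b z.2, hline z.1 z.2⟩
              continuous_toFun := by fun_prop
              map_zero_left := fun s => Subtype.ext (by simp [g])
              map_one_left := fun s => Subtype.ext (by simp [β])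
              prop' := ?_ }⟩
    rintro t s (rfl | rfl)
    · apply Subtype.ext
      simp [g, hb0, ← add_smul]
    · apply Subtype.ext
      simp [g, hb1, ← add_smul]
  obtain ⟨q, hq⟩ := (exists_cone_pt S hS hE p hp).nonempty
  have hcone : ∀ t s : I, (1 - (t : ℝ)) • b s + (t : ℝ) • q ∈ U := by
    intro t s i
    refine cone_mem S (hbU s i) ?_ t
    intro x hx c h
    exact hq i x hx c s (by rw [h, hpb])
  have hqU : q ∈ U := by simpa using hcone 1 0
  refine H1.trans (null_of_free (q := ⟨q, hqU⟩) β
    { toFun := fun z => ⟨(1 - (z.1 : ℝ)) • b z.2 + (z.1 : ℝ) • q, hcone z.1 z.2⟩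
      continuous_toFun := by fun_prop
      map_zero_left := fun s => Subtype.ext (by simp [β])
      map_one_left := fun s => Subtype.ext (by simp) } ?_)
  intro t
  apply Subtype.ext
  show (1 - (t : ℝ)) • b 0 + (t : ℝ) • q = (1 - (t : ℝ)) • b 1 + (t : ℝ) • q
  rw [hb0, hb1]

end general

/-- The linear map from a product submodule to the product of the submodules. -/
def prodEmb {V W : Type*} [AddCommGroup V] [Module ℂ V] [AddCommGroup W] [Module ℂ W]
    (P : Submodule ℂ V) (Q : Submodule ℂ W) : P.prod Q →ₗ[ℂ] P × Q where
  toFun x := (⟨x.1.1, x.2.1⟩, ⟨x.1.2, x.2.2⟩)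
  map_add' _ _ := rfl
  map_smul' _ _ := rfl

lemma prodEmb_injective {V W : Type*} [AddCommGroup V] [Module ℂ V] [AddCommGroup W] [Module ℂ W]
    (P : Submodule ℂ V) (Q : Submodule ℂ W) : Function.Injective (prodEmb P Q) := by
  intro x y h
  have h1 := congrArg (fun z => (z.1 : V)) h
  have h2 := congrArg (fun z => (z.2 : W)) h
  exact Subtype.ext (Prod.ext h1 h2)

/-- The fixed space of a nontrivial matrix is a proper subspace. -/
lemma finrank_ker_lt (m : ℕ) (A : Matrix (Fin m) (Fin m) ℂ) (hA : A ≠ 1) :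
    Module.finrank ℂ (LinearMap.ker (A.mulVecLin - LinearMap.id)) + 1 ≤ m := by
  have h : LinearMap.ker (A.mulVecLin - LinearMap.id) ≠ ⊤ := by
    intro h
    rw [LinearMap.ker_eq_top, sub_eq_zero] at h
    apply hA
    apply Matrix.toLin'.injective
    rw [Matrix.toLin'_one, Matrix.toLin'_apply', h]
  have := Submodule.finrank_lt h
  simp at this
  omega

theorem nontrivial_stabilizer_locus_and_free_locus
    (m : ℕ) (hm : 1 ≤ m) (H : Type) [Group H] [Finite H]
    (ρ : H →* Matrix.unitaryGroup (Fin m) ℂ) (hρ : Function.Injective ρ) :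
    ({x | ∃ h : H, h ≠ 1 ∧ act m ρ h x = x} =
        ⋃ (h : H) (_ : h ≠ 1), Fix m ρ h) ∧
    (∀ h : H, h ≠ 1 →
      ∃ S : Submodule ℂ ((Fin m → ℂ) × (Fin m → ℂ)),
        (S : Set ((Fin m → ℂ) × (Fin m → ℂ))) = Fix m ρ h ∧
        Module.finrank ℂ S + 2 ≤ 2 * m) ∧
    IsOpen (F m ρ) ∧ Dense (F m ρ) ∧ IsPathConnected (F m ρ) ∧
      SimplyConnectedSpace ↥(F m ρ) := by
  classical
  let S : H → Submodule ℂ ((Fin m → ℂ) × (Fin m → ℂ)) := fun h =>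
    (LinearMap.ker ((ρ h : Matrix (Fin m) (Fin m) ℂ).mulVecLin - LinearMap.id)).prod
    (LinearMap.ker (((ρ h : Matrix (Fin m) (Fin m) ℂ).map (starRingEnd ℂ)).mulVecLin
      - LinearMap.id))
  have hmem : ∀ h x, x ∈ S h ↔ act m ρ h x = x := by
    intro h x
    simp [S, act, Submodule.mem_prod, sub_eq_zero, Prod.ext_iff]
  have hdim : ∀ h, h ≠ 1 → Module.finrank ℂ (S h) + 2 ≤ 2 * m := by
    intro h hh
    have h1 : (ρ h : Matrix (Fin m) (Fin m) ℂ) ≠ 1 := by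
      intro e
      apply hh
      apply hρ
      rw [map_one]
      exact Subtype.ext e
    have h2 : (ρ h : Matrix (Fin m) (Fin m) ℂ).map (starRingEnd ℂ) ≠ 1 := by
      intro e
      apply h1
      have e2 := congrArg (fun M : Matrix (Fin m) (Fin m) ℂ => M.map (starRingEnd ℂ)) e
      simpa [Matrix.map_map, Function.comp_def, Matrix.map_one] using e2
    have a1 := finrank_ker_lt m _ h1
    have a2 := finrank_ker_lt m _ h2
    have e := LinearMap.finrank_le_finrank_of_injective (prodEmb_injective
      (LinearMap.ker ((ρ h : Matrix (Fin m) (Fin m) ℂ).mulVecLin - LinearMap.id))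
      (LinearMap.ker (((ρ h : Matrix (Fin m) (Fin m) ℂ).map (starRingEnd ℂ)).mulVecLin
        - LinearMap.id)))
    rw [Module.finrank_prod] at e
    change Module.finrank ℂ (S h) ≤ _ at e
    omega
  let T : {h : H // h ≠ 1} → Submodule ℝ ((Fin m → ℂ) × (Fin m → ℂ)) :=
    fun h => (S h.1).restrictScalars ℝ
  have hF : F m ρ = {x | ∀ i, x ∉ T i} := by
    ext x
    simp only [F, Set.mem_ofPred_eq, T, Submodule.restrictScalars_mem, hmem, Subtype.forall]
    exact forall_congr' fun h => ⟨fun a b c => b (a c), fun a b => by_contra fun c => a c b⟩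
  have hEdim : Module.finrank ℝ ((Fin m → ℂ) × (Fin m → ℂ)) = 4 * m := by
    rw [finrank_real_of_complex, Module.finrank_prod]
    simp
    ring
  have hT : ∀ i, Module.finrank ℝ (T i) + 2 < Module.finrank ℝ ((Fin m → ℂ) × (Fin m → ℂ)) := by
    intro i
    have h1 := hdim i.1 i.2
    have h2 : Module.finrank ℝ (T i) = 2 * Module.finrank ℂ (S i.1) :=
      finrank_real_of_complex (S i.1)
    omega
  have hE : 0 < Module.finrank ℝ ((Fin m → ℂ) × (Fin m → ℂ)) := by omega
  refine ⟨?_, fun h hh => ⟨S h, ?_, hdim h hh⟩, ?_⟩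
  · ext x
    simp [Fix]
  · ext x
    exact hmem h x
  · rw [hF]
    exact ⟨isOpen_U T, dense_U T hT hE, pathConn_U T hT hE, simplyConn_U T hT hE⟩

end Stmt3
end

section
/- Let SO(3) act diagonally on V = ℂ³ ⊕ ℂ³ (each factor carrying the complexified standard action by matrix multiplication), with moment map J : V → so(3)*, J(z₁,z₂)(ξ) = Im(⟨ξz₁, z₁⟩ + ⟨ξz₂, z₂⟩) for ξ ∈ so(3), where ⟨u,v⟩ = Σᵢ uᵢ \overline{vᵢ}, and set M = J⁻¹(0). Identify ℂ³ ⊕ ℂ³ with (ℝ³)⁴ via (x₁ + iy₁, x₂ + iy₂) ↔ (x₁, y₁, x₂, y₂) and let u₁,u₂,u₃,u₄ denote x₁,y₁,x₂,y₂. Then the restrictions to M of the ten quadratic forms ⟨uᵢ, uⱼ⟩ (1 ≤ i ≤ j ≤ 4) are linearly independent: no nonzero real linear combination of these ten forms vanishes identically on M. -/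
/-!
Statement 7: For the diagonal SO(3)-action on ℂ³ ⊕ ℂ³ with moment map
`J(z₁,z₂)(ξ) = Im(⟨ξz₁,z₁⟩ + ⟨ξz₂,z₂⟩)` and `M = J⁻¹(0)`, the restrictions to `M` of the ten
quadratic forms `⟨uᵢ,uⱼ⟩` (`i ≤ j`, in the real coordinates `u₁,…,u₄ = x₁,y₁,x₂,y₂`) are
linearly independent.
-/

namespace Stmt7

open Complex

/-- Hermitian pairing `⟨ξ z, z⟩` of a real matrix `ξ` applied to `z` against `z`. -/
noncomputable def pair (ξ : Matrix (Fin 3) (Fin 3) ℝ) (z : Fin 3 → ℂ) : ℂ :=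
  ∑ i, (ξ.map (Complex.ofReal)).mulVec z i * (starRingEnd ℂ) (z i)

/-- The zero set `M = J⁻¹(0)` of the moment map of the SO(3)-action on ℂ³ ⊕ ℂ³:
`J(z)(ξ) = Im(⟨ξz₁,z₁⟩ + ⟨ξz₂,z₂⟩)` for all `ξ ∈ so(3)` (real skew-symmetric matrices). -/
def M : Set ((Fin 3 → ℂ) × (Fin 3 → ℂ)) :=
  {z | ∀ ξ : Matrix (Fin 3) (Fin 3) ℝ, ξ.transpose = -ξ →
    (pair ξ z.1 + pair ξ z.2).im = 0}

/-- The identification of ℂ³ ⊕ ℂ³ with (ℝ³)⁴ via real and imaginary parts: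
`u₁ = x₁, u₂ = y₁, u₃ = x₂, u₄ = y₂`. -/
def toReal (z : (Fin 3 → ℂ) × (Fin 3 → ℂ)) : Fin 4 → Fin 3 → ℝ :=
  ![fun a => (z.1 a).re, fun a => (z.1 a).im, fun a => (z.2 a).re, fun a => (z.2 a).im]

/-- The quadratic form `q_{ij}(u) = ⟨uᵢ, uⱼ⟩`. -/
def qf (i j : Fin 4) (u : Fin 4 → Fin 3 → ℝ) : ℝ := ∑ a, u i a * u j a

/-- No nonzero real linear combination of the ten forms `⟨uᵢ,uⱼ⟩`, `i ≤ j`, vanishes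
identically on `M`. -/
theorem quadratic_invariants_linearly_independent_on_M
    (c : Fin 4 → Fin 4 → ℝ)
    (hvanish : ∀ z ∈ M,
      ∑ i : Fin 4, ∑ j : Fin 4, (if i ≤ j then c i j else 0) * qf i j (toReal z) = 0) :
    ∀ i j : Fin 4, i ≤ j → c i j = 0 := by
  have key : ∀ a b d e : ℝ,
      c 0 0 * (a * a) + c 0 1 * (a * b) + c 0 2 * (a * d) + c 0 3 * (a * e)
      + c 1 1 * (b * b) + c 1 2 * (b * d) + c 1 3 * (b * e)
      + c 2 2 * (d * d) + c 2 3 * (d * e) + c 3 3 * (e * e) = 0 := by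
    intro a b d e
    have hm : ((![⟨a, b⟩, 0, 0], ![⟨d, e⟩, 0, 0]) : (Fin 3 → ℂ) × (Fin 3 → ℂ)) ∈ M := by
      intro ξ hξ
      have h0 : ξ 0 0 = 0 := by
        have h := congrFun (congrFun hξ 0) 0
        simp only [Matrix.transpose_apply, Matrix.neg_apply] at h
        linarith
      simp [pair, Fin.sum_univ_three, Matrix.mulVec, dotProduct, h0]
    have h := hvanish _ hm
    simp [Fin.sum_univ_four, Fin.sum_univ_three, qf, toReal] at h
    linarith
  have h0 := key 1 0 0 0
  have h1 := key 0 1 0 0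
  have h2 := key 0 0 1 0
  have h3 := key 0 0 0 1
  have h01 := key 1 1 0 0
  have h02 := key 1 0 1 0
  have h03 := key 1 0 0 1
  have h12 := key 0 1 1 0
  have h13 := key 0 1 0 1
  have h23 := key 0 0 1 1
  clear key hvanish
  intro i j hij
  fin_cases i <;> fin_cases j <;>
    first
    | (exfalso; revert hij; decide)
    | (clear hij; simp only [Fin.mk_zero, Fin.mk_one, Fin.reduceFinMk, Fin.zero_eta, Fin.isValue]; linarith)

end Stmt7
end

section
/- Let SO(3) act diagonally on V = ℂ³ ⊕ ℂ³ (complexified standard action on each factor), with moment map J(z₁,z₂)(ξ) = Im(⟨ξz₁, z₁⟩ + ⟨ξz₂, z₂⟩) for ξ ∈ so(3), M = J⁻¹(0), and symplectic quotient M₀ = M/SO(3) with the quotient topology. Then for every m ≥ 1 and every finite subgroup H of U(m), there is no ℤ-graded regular diffeomorphism from M₀ to the linear symplectic orbifold ℂᵐ/H. -/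
/-!
Statement 8: For the diagonal SO(3)-action on ℂ³ ⊕ ℂ³ (the SU(2)-module 2R₂) with symplectic
quotient M₀, there is no ℤ-graded regular diffeomorphism from M₀ to any linear symplectic
orbifold ℂᵐ/H.
-/

namespace Stmt8

noncomputable section

open MvPolynomial Complex

/-- Evaluation of a real polynomial in the real coordinates (indexed by `ι × Bool`) at a
point of `ι → ℂ`. -/
def evalR {ι : Type} (p : MvPolynomial (ι × Bool) ℝ) (z : ι → ℂ) : ℝ :=
  MvPolynomial.eval (fun q => if q.2 then (z q.1).im else (z q.1).re) p

/-- The special orthogonal group SO(3) as a set of matrices. -/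
def SO3 : Set (Matrix (Fin 3) (Fin 3) ℝ) :=
  {g | g * g.transpose = 1 ∧ g.det = 1}

/-- The diagonal action of `g` on ℂ³ ⊕ ℂ³. -/
def act (g : Matrix (Fin 3) (Fin 3) ℝ) (z : (Fin 3 → ℂ) × (Fin 3 → ℂ)) :
    (Fin 3 → ℂ) × (Fin 3 → ℂ) :=
  ((g.map Complex.ofReal).mulVec z.1, (g.map Complex.ofReal).mulVec z.2)

/-- Hermitian pairing `⟨ξ z, z⟩` of a real matrix `ξ` applied to `z` against `z`. -/
def pair (ξ : Matrix (Fin 3) (Fin 3) ℝ) (z : Fin 3 → ℂ) : ℂ :=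
  ∑ i, (ξ.map Complex.ofReal).mulVec z i * (starRingEnd ℂ) (z i)

/-- The zero set `M = J⁻¹(0)` of the moment map `J(z)(ξ) = Im(⟨ξz₁,z₁⟩ + ⟨ξz₂,z₂⟩)`. -/
def M : Set ((Fin 3 → ℂ) × (Fin 3 → ℂ)) :=
  {z | ∀ ξ : Matrix (Fin 3) (Fin 3) ℝ, ξ.transpose = -ξ →
    (pair ξ z.1 + pair ξ z.2).im = 0}

/-- Orbit equivalence on `M` for the SO(3)-action. -/
def relM (x y : M) : Prop :=
  ∃ g ∈ SO3, (y : (Fin 3 → ℂ) × (Fin 3 → ℂ)) = act g (x : (Fin 3 → ℂ) × (Fin 3 → ℂ))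

/-- The symplectic quotient `M₀ = M/SO(3)` with the quotient topology. -/
def M₀ : Type := Quot relM

instance : TopologicalSpace M₀ := instTopologicalSpaceQuot

/-- The complex coordinates of a point of ℂ³ ⊕ ℂ³, as a function `Fin 3 ⊕ Fin 3 → ℂ`. -/
def cc (z : (Fin 3 → ℂ) × (Fin 3 → ℂ)) : Fin 3 ⊕ Fin 3 → ℂ := Sum.elim z.1 z.2

/-- The degree-`d` regular functions on `M₀`: functions induced by restriction to `M` of
SO(3)-invariant real polynomial functions on ℂ³ ⊕ ℂ³ homogeneous of degree `d`. -/
def RegM (d : ℕ) : Set (M₀ → ℝ) :=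
  {f | ∃ p : MvPolynomial ((Fin 3 ⊕ Fin 3) × Bool) ℝ, p.IsHomogeneous d ∧
    (∀ g ∈ SO3, ∀ z : (Fin 3 → ℂ) × (Fin 3 → ℂ), evalR p (cc (act g z)) = evalR p (cc z)) ∧
    ∀ x : M, f (Quot.mk _ x) = evalR p (cc (x : (Fin 3 → ℂ) × (Fin 3 → ℂ)))}

/-- Orbit equivalence for a subgroup `H` of the unitary group acting on ℂᵐ. -/
def relH (m : ℕ) (H : Subgroup (Matrix.unitaryGroup (Fin m) ℂ)) (v w : Fin m → ℂ) : Prop :=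
  ∃ h ∈ H, w = Matrix.mulVec (h : Matrix (Fin m) (Fin m) ℂ) v

/-- The linear symplectic orbifold ℂᵐ/H with the quotient topology. -/
def Y (m : ℕ) (H : Subgroup (Matrix.unitaryGroup (Fin m) ℂ)) : Type := Quot (relH m H)

instance (m : ℕ) (H : Subgroup (Matrix.unitaryGroup (Fin m) ℂ)) : TopologicalSpace (Y m H) :=
  instTopologicalSpaceQuot

/-- The degree-`d` regular functions on `ℂᵐ/H`. -/
def RegY (m : ℕ) (H : Subgroup (Matrix.unitaryGroup (Fin m) ℂ)) (d : ℕ) :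
    Set (Y m H → ℝ) :=
  {f | ∃ p : MvPolynomial (Fin m × Bool) ℝ, p.IsHomogeneous d ∧
    (∀ h ∈ H, ∀ v : Fin m → ℂ,
      evalR p (Matrix.mulVec (h : Matrix (Fin m) (Fin m) ℂ) v) = evalR p v) ∧
    ∀ v : Fin m → ℂ, f (Quot.mk _ v) = evalR p v}





/-- real coordinates, as a linear map -/
def rl (ι : Type) : (ι → ℂ) →ₗ[ℝ] (ι × Bool → ℝ) where
  toFun z := fun q => if q.2 then (z q.1).im else (z q.1).re
  map_add' x y := by
    funext q; by_cases h : q.2 <;> simp [h]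
  map_smul' c x := by
    funext q; by_cases h : q.2 <;> simp [h]

lemma evalR_eq {ι : Type} (p : MvPolynomial (ι × Bool) ℝ) (z : ι → ℂ) :
    evalR p z = eval (rl ι z) p := rfl

lemma mono_bilin {σ : Type} (d : σ →₀ ℕ) (hd : d.degree = 2) :
    ∃ i j, d = Finsupp.single i 1 + Finsupp.single j 1 := by
  have h0 : d ≠ 0 := by rintro rfl; simp at hd
  obtain ⟨i, hi⟩ := Finsupp.ne_iff.mp h0
  have hle : Finsupp.single i 1 ≤ d := by
    rw [Finsupp.single_le_iff]; exact Nat.one_le_iff_ne_zero.mpr hi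
  obtain ⟨e, he⟩ := exists_add_of_le hle
  have : e.degree = 1 := by
    rw [he, map_add, Finsupp.degree_single] at hd; omega
  have h0 : e ≠ 0 := by rintro rfl; simp at this
  obtain ⟨j, hj⟩ := Finsupp.ne_iff.mp h0
  have hle : Finsupp.single j 1 ≤ e := by
    rw [Finsupp.single_le_iff]; exact Nat.one_le_iff_ne_zero.mpr hj
  obtain ⟨e', he'⟩ := exists_add_of_le hle
  have h3 : e'.degree = 0 := by
    rw [he', map_add, Finsupp.degree_single] at this; omega
  rw [Finsupp.degree_eq_zero_iff] at h3
  exact ⟨i, j, by rw [he, he', h3, add_zero]⟩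

lemma hom_bilin {σ : Type} (p : MvPolynomial σ ℝ) (hp : p.IsHomogeneous 2) :
    ∃ B : (σ → ℝ) →ₗ[ℝ] (σ → ℝ) →ₗ[ℝ] ℝ, ∀ x, eval x p = B x x := by
  have key : ∀ d ∈ p.support, ∃ B : (σ → ℝ) →ₗ[ℝ] (σ → ℝ) →ₗ[ℝ] ℝ,
      ∀ x, eval x (monomial d (coeff d p)) = B x x := by
    intro d hd
    have h2 : d.degree = 2 := by
      have := hp (mem_support_iff.mp hd)
      rw [Finsupp.degree_eq_weight_one]; exact this
    obtain ⟨i, j, rfl⟩ := mono_bilin d h2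
    refine ⟨LinearMap.mk₂ ℝ (fun x y => coeff (Finsupp.single i 1 + Finsupp.single j 1) p * (x i * y j)) ?_ ?_ ?_ ?_, ?_⟩
    · intros; simp; ring
    · intros; simp; ring
    · intros; simp; ring
    · intros; simp; ring
    · intro x
      rw [eval_monomial, Finsupp.prod_add_index' (by simp) (by intros; rw [pow_add])]
      simp
  choose! B hB using key
  refine ⟨∑ d ∈ p.support, B d, fun x => ?_⟩
  conv_lhs => rw [as_sum p]
  rw [map_sum, LinearMap.sum_apply, LinearMap.sum_apply]
  exact Finset.sum_congr rfl fun d hd => hB d hd x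

lemma evalR_bilin {ι : Type} (p : MvPolynomial (ι × Bool) ℝ) (hp : p.IsHomogeneous 2) :
    ∃ B : (ι → ℂ) →ₗ[ℝ] (ι → ℂ) →ₗ[ℝ] ℝ, ∀ x, evalR p x = B x x := by
  obtain ⟨B, hB⟩ := hom_bilin p hp
  exact ⟨B.compl₁₂ (rl ι) (rl ι), fun x => by rw [evalR_eq, hB]; rfl⟩

/-- quadratic functions -/
def IsQuad {ι : Type} (F : (ι → ℂ) → ℝ) : Prop :=
  ∃ p : MvPolynomial (ι × Bool) ℝ, p.IsHomogeneous 2 ∧ ∀ z, evalR p z = F z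

lemma IsQuad.bilin {ι : Type} {F : (ι → ℂ) → ℝ} (h : IsQuad F) :
    ∃ B : (ι → ℂ) →ₗ[ℝ] (ι → ℂ) →ₗ[ℝ] ℝ, ∀ x, F x = B x x := by
  obtain ⟨p, hp, h⟩ := h
  obtain ⟨B, hB⟩ := evalR_bilin p hp
  exact ⟨B, fun x => by rw [← h, hB]⟩

lemma IsQuad.sum {ι κ : Type} (s : Finset κ) {F : κ → (ι → ℂ) → ℝ} (h : ∀ k ∈ s, IsQuad (F k)) :
    IsQuad (fun z => ∑ k ∈ s, F k z) := by
  choose! p hp h using h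
  refine ⟨∑ k ∈ s, p k, IsHomogeneous.sum _ _ _ hp, fun z => ?_⟩
  rw [evalR_eq, map_sum]
  exact Finset.sum_congr rfl fun k hk => h k hk z

lemma lin_poly {ι : Type} [Fintype ι] [DecidableEq ι] (L : (ι → ℂ) →ₗ[ℝ] ℝ) :
    ∃ p : MvPolynomial (ι × Bool) ℝ, p.IsHomogeneous 1 ∧ ∀ z, evalR p z = L z := by
  refine ⟨∑ i, (C (L (Pi.single i 1)) * X (i, false) + C (L (Pi.single i I)) * X (i, true)), ?_, ?_⟩
  · refine IsHomogeneous.sum _ _ _ fun i _ => ?_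
    exact (isHomogeneous_C_mul_X _ _).add (isHomogeneous_C_mul_X _ _)
  · intro z
    have hz : z = ∑ i, ((z i).re • (Pi.single i (1:ℂ) : ι → ℂ) + (z i).im • (Pi.single i I : ι → ℂ)) := by
      funext j
      simp only [Finset.sum_apply, Pi.add_apply, Pi.smul_apply, Pi.single_apply, Finset.sum_add_distrib]
      simp [Complex.re_add_im]
    conv_rhs => rw [hz]
    rw [map_sum, evalR_eq, map_sum]
    refine Finset.sum_congr rfl fun i _ => ?_
    simp [rl]; ring

lemma IsQuad.mul {ι : Type} [Fintype ι] [DecidableEq ι] (L L' : (ι → ℂ) →ₗ[ℝ] ℝ) :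
    IsQuad (fun z => L z * L' z) := by
  obtain ⟨p, hp, h⟩ := lin_poly L
  obtain ⟨p', hp', h'⟩ := lin_poly L'
  refine ⟨p * p', hp.mul hp', fun z => ?_⟩
  rw [evalR_eq, map_mul]
  exact congrArg₂ (· * ·) (h z) (h' z)

/-- rank one points -/
def tens (n : Fin 3 → ℝ) (a b : ℂ) : (Fin 3 → ℂ) × (Fin 3 → ℂ) :=
  (fun i => n i * a, fun i => n i * b)

lemma pair_tens_im (ξ : Matrix (Fin 3) (Fin 3) ℝ) (n : Fin 3 → ℝ) (a : ℂ) :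
    (pair ξ (fun i => n i * a)).im = 0 := by
  simp [pair, Matrix.mulVec, dotProduct, Fin.sum_univ_three]
  ring

lemma tens_mem (n a b) : tens n a b ∈ M := by
  intro ξ _
  rw [Complex.add_im]
  simp only [tens]
  rw [pair_tens_im, pair_tens_im, add_zero]

lemma exists_rot_unit (n : Fin 3 → ℝ) (hn : n 0 ^ 2 + n 1 ^ 2 + n 2 ^ 2 = 1) :
    ∃ g ∈ SO3, n = g.mulVec (Pi.single 0 1) := by
  by_cases h : n 0 = -1
  · have h1 : n 1 = 0 := by nlinarith [sq_nonneg (n 1), sq_nonneg (n 2)]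
    have h2 : n 2 = 0 := by nlinarith [sq_nonneg (n 1), sq_nonneg (n 2)]
    refine ⟨!![-1,0,0;0,-1,0;0,0,1], ⟨?_, ?_⟩, ?_⟩
    · ext i j; fin_cases i <;> fin_cases j <;> simp [Matrix.mul_apply, Fin.sum_univ_three]
    · simp [Matrix.det_fin_three]
    · funext i; fin_cases i <;> simp [h, h1, h2]
  · have h' : 1 + n 0 ≠ 0 := fun hh => h (by linarith)
    generalize ha : n 0 = a at *
    generalize hb : n 1 = b at *
    generalize hc : n 2 = c at *
    refine ⟨!![a,-b,-c;b,1-b^2/(1+a),-b*c/(1+a);c,-b*c/(1+a),1-c^2/(1+a)], ⟨?_, ?_⟩, ?_⟩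
    · have hc2 : c ^ 2 = 1 - a ^ 2 - b ^ 2 := by linarith
      ext i j
      fin_cases i <;> fin_cases j <;>
        simp [Matrix.mul_apply, Fin.sum_univ_three] <;> field_simp <;>
        first | ring1 | grind
    · simp [Matrix.det_fin_three]; field_simp; grind
    · funext i; fin_cases i <;> simp [ha, hb, hc]

lemma exists_rot (n : Fin 3 → ℝ) :
    ∃ g ∈ SO3, ∃ s : ℝ, 0 ≤ s ∧ ∀ a b, tens n a b = act g (tens (Pi.single 0 1) (s * a) (s * b)) := by
  by_cases h0 : n = 0
  · refine ⟨1, by simp [SO3], 0, le_rfl, fun a b => ?_⟩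
    subst h0
    ext i <;> simp [tens, act, Matrix.mulVec, dotProduct, Fin.sum_univ_three]
  · set s := Real.sqrt (n 0 ^ 2 + n 1 ^ 2 + n 2 ^ 2) with hs
    have hpos : 0 < n 0 ^ 2 + n 1 ^ 2 + n 2 ^ 2 := by
      by_contra hle
      apply h0
      funext i
      fin_cases i <;> simp <;> nlinarith [sq_nonneg (n 0), sq_nonneg (n 1), sq_nonneg (n 2)]
    have hsp : 0 < s := Real.sqrt_pos.mpr hpos
    have hs2 : s ^ 2 = n 0 ^ 2 + n 1 ^ 2 + n 2 ^ 2 := Real.sq_sqrt hpos.le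
    obtain ⟨g, hg, hgn⟩ := exists_rot_unit (fun i => n i / s) (by field_simp; linarith)
    refine ⟨g, hg, s, hsp.le, fun a b => ?_⟩
    have : ∀ i, n i = g i 0 * s := by
      intro i
      have := congrFun hgn i
      simp at this
      rw [← this]; field_simp
    ext i <;> simp [tens, act, Matrix.mulVec, dotProduct, Fin.sum_univ_three, this] <;> ring

/-- rank one classes -/
def φ (a b : ℂ) : M₀ := Quot.mk _ ⟨tens (Pi.single 0 1) a b, tens_mem _ _ _⟩

lemma mk_tens (n : Fin 3 → ℝ) : ∃ s : ℝ, 0 ≤ s ∧ ∀ a b (h : tens n a b ∈ M),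
    (Quot.mk _ ⟨tens n a b, h⟩ : M₀) = φ (s * a) (s * b) := by
  obtain ⟨g, hg, s, hs, h⟩ := exists_rot n
  exact ⟨s, hs, fun a b hm => (Quot.sound ⟨g, hg, h a b⟩).symm⟩

lemma cc_bilin (p : MvPolynomial ((Fin 3 ⊕ Fin 3) × Bool) ℝ) (hp : p.IsHomogeneous 2) :
    ∃ B : ((Fin 3 → ℂ) × (Fin 3 → ℂ)) →ₗ[ℝ] ((Fin 3 → ℂ) × (Fin 3 → ℂ)) →ₗ[ℝ] ℝ,
      ∀ z, evalR p (cc z) = B z z := by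
  obtain ⟨B, hB⟩ := evalR_bilin p hp
  let c : ((Fin 3 → ℂ) × (Fin 3 → ℂ)) →ₗ[ℝ] (Fin 3 ⊕ Fin 3 → ℂ) :=
    { toFun := cc
      map_add' := by intro x y; funext i; cases i <;> simp [cc]
      map_smul' := by intro x y; funext i; cases i <;> simp [cc] }
  exact ⟨B.compl₁₂ c c, fun z => by rw [hB]; rfl⟩

lemma quad_split (p : MvPolynomial ((Fin 3 ⊕ Fin 3) × Bool) ℝ) (hp : p.IsHomogeneous 2)
    (x y : (Fin 3 → ℂ) × (Fin 3 → ℂ)) (h : evalR p (cc (x - y)) = evalR p (cc (x + y))) :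
    evalR p (cc (x + y)) = evalR p (cc x) + evalR p (cc y) := by
  obtain ⟨B, hB⟩ := cc_bilin p hp
  simp only [hB] at *
  simp only [map_add, map_sub, LinearMap.add_apply, LinearMap.sub_apply] at *
  linarith

lemma quad_rows (p : MvPolynomial ((Fin 3 ⊕ Fin 3) × Bool) ℝ) (hp : p.IsHomogeneous 2)
    (hinv : ∀ g ∈ SO3, ∀ z : (Fin 3 → ℂ) × (Fin 3 → ℂ), evalR p (cc (act g z)) = evalR p (cc z))
    (z : (Fin 3 → ℂ) × (Fin 3 → ℂ)) :
    evalR p (cc z) = evalR p (cc (tens (Pi.single 0 1) (z.1 0) (z.2 0))) +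
      (evalR p (cc (tens (Pi.single 1 1) (z.1 1) (z.2 1))) +
      evalR p (cc (tens (Pi.single 2 1) (z.1 2) (z.2 2)))) := by
  have g1 : !![1,0,0;0,-1,0;0,0,-1] ∈ SO3 := by
    refine ⟨?_, ?_⟩
    · ext i j; fin_cases i <;> fin_cases j <;> simp [Matrix.mul_apply, Fin.sum_univ_three]
    · simp [Matrix.det_fin_three]
  have g2 : !![-1,0,0;0,1,0;0,0,-1] ∈ SO3 := by
    refine ⟨?_, ?_⟩
    · ext i j; fin_cases i <;> fin_cases j <;> simp [Matrix.mul_apply, Fin.sum_univ_three]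
    · simp [Matrix.det_fin_three]
  rw [← quad_split p hp, ← quad_split p hp]
  · congr 2
    ext i <;> fin_cases i <;> simp [tens, Pi.single_apply]
  · rw [← hinv _ g1]
    congr 2
    ext i <;> fin_cases i <;> simp [tens, Pi.single_apply, act, Matrix.mulVec, dotProduct, Fin.sum_univ_three]
  · rw [← hinv _ g2]
    congr 2
    ext i <;> fin_cases i <;> simp [tens, Pi.single_apply, act, Matrix.mulVec, dotProduct, Fin.sum_univ_three]

lemma regM_zero {f : M₀ → ℝ} (hf : f ∈ RegM 2) (h : ∀ a b, f (φ a b) = 0) : f = 0 := by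
  obtain ⟨p, hp, hinv, hfp⟩ := hf
  funext x
  obtain ⟨z, rfl⟩ := Quot.exists_rep x
  have key : ∀ n a b, evalR p (cc (tens n a b)) = 0 := by
    intro n a b
    obtain ⟨s, _, hs⟩ := mk_tens n
    have := hfp ⟨tens n a b, tens_mem _ _ _⟩
    rw [hs, h] at this
    exact this.symm
  rw [hfp, quad_rows p hp hinv, key, key, key]; simp; rfl

/-- the linear combination of the four real vectors -/
def R (ζ : Fin 4 → ℝ) (i : Fin 3) (z : Fin 3 ⊕ Fin 3 → ℂ) : ℝ :=
  ζ 0 * (z (.inl i)).re + ζ 1 * (z (.inl i)).im + ζ 2 * (z (.inr i)).re + ζ 3 * (z (.inr i)).im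

/-- R as a linear map -/
def Rl (ζ : Fin 4 → ℝ) (i : Fin 3) : (Fin 3 ⊕ Fin 3 → ℂ) →ₗ[ℝ] ℝ where
  toFun := R ζ i
  map_add' x y := by simp [R]; ring
  map_smul' c x := by simp [R]; ring

lemma R_act (g) (ζ i z) : R ζ i (cc (act g z)) = ∑ j, g i j * R ζ j (cc z) := by
  simp [R, cc, act, Matrix.mulVec, dotProduct, Fin.sum_univ_three]; ring

lemma R_inv (g) (hg : g ∈ SO3) (ζ z) :
    ∑ i, R ζ i (cc (act g z)) * R ζ i (cc (act g z)) = ∑ i, R ζ i (cc z) * R ζ i (cc z) := by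
  have h : g.transpose * g = 1 := mul_eq_one_comm.mp hg.1
  set r : Fin 3 → ℝ := fun i => R ζ i (cc z)
  have h1 : (fun i => R ζ i (cc (act g z))) = g.mulVec r := by
    funext i; rw [R_act]; rfl
  change (fun i => R ζ i (cc (act g z))) ⬝ᵥ (fun i => R ζ i (cc (act g z))) = r ⬝ᵥ r
  rw [h1, Matrix.dotProduct_mulVec, ← Matrix.mulVec_transpose, Matrix.mulVec_mulVec, h, Matrix.one_mulVec]

/-- the Gram functions -/
lemma exists_f (ζ : Fin 4 → ℝ) : ∃ f ∈ RegM 2, ∀ x : M, f (Quot.mk _ x) =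
    ∑ i, R ζ i (cc x) * R ζ i (cc x) := by
  obtain ⟨p, hp, h⟩ := IsQuad.sum Finset.univ (fun i _ => IsQuad.mul (Rl ζ i) (Rl ζ i))
  have hinv : ∀ g ∈ SO3, ∀ z : (Fin 3 → ℂ) × (Fin 3 → ℂ),
      evalR p (cc (act g z)) = evalR p (cc z) := by
    intro g hg z
    rw [h, h]; exact R_inv g hg ζ z
  refine ⟨Quot.lift (fun x : M => evalR p (cc (x : (Fin 3 → ℂ) × (Fin 3 → ℂ)))) ?_, ⟨p, hp, hinv, ?_⟩, ?_⟩
  · rintro x y ⟨g, hg, hxy⟩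
    simp only [hxy, hinv g hg]
  · intro x; rfl
  · intro x; exact h _

lemma sum_R_tens (ζ : Fin 4 → ℝ) (a b : ℂ) :
    ∑ i, R ζ i (cc (tens (Pi.single 0 1) a b)) * R ζ i (cc (tens (Pi.single 0 1) a b)) =
      (ζ 0 * a.re + ζ 1 * a.im + ζ 2 * b.re + ζ 3 * b.im) ^ 2 := by
  simp [R, cc, tens, Fin.sum_univ_three, Pi.single_apply]; ring

lemma sepM (x : M₀) (a b : ℂ) (hab : a ≠ 0 ∨ b ≠ 0)
    (h : ∀ ζ : Fin 4 → ℝ, ζ 0 * a.re + ζ 1 * a.im + ζ 2 * b.re + ζ 3 * b.im = 0 →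
      ∀ f ∈ RegM 2, (∀ y : M, f (Quot.mk _ y) = ∑ i, R ζ i (cc y) * R ζ i (cc y)) → f x = 0) :
    ∃ μ : ℝ, 0 ≤ μ ∧ x = φ (μ * a) (μ * b) := by
  obtain ⟨⟨z, hz⟩, rfl⟩ := Quot.exists_rep x
  have h1 : ∀ ζ : Fin 4 → ℝ, ζ 0 * a.re + ζ 1 * a.im + ζ 2 * b.re + ζ 3 * b.im = 0 →
      ∀ i, R ζ i (cc z) = 0 := by
    intro ζ hζ i
    obtain ⟨f, hf, hfe⟩ := exists_f ζ
    have := h ζ hζ f hf hfe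
    rw [hfe, Finset.sum_eq_zero_iff_of_nonneg (fun i _ => mul_self_nonneg _)] at this
    exact mul_self_eq_zero.mp (this i (Finset.mem_univ _))
  set N : ℝ := a.re ^ 2 + a.im ^ 2 + b.re ^ 2 + b.im ^ 2 with hN
  have hNpos : N ≠ 0 := by
    intro h0
    have e1 : a.re = 0 := by nlinarith [sq_nonneg a.re, sq_nonneg a.im, sq_nonneg b.re, sq_nonneg b.im]
    have e2 : a.im = 0 := by nlinarith [sq_nonneg a.re, sq_nonneg a.im, sq_nonneg b.re, sq_nonneg b.im]
    have e3 : b.re = 0 := by nlinarith [sq_nonneg a.re, sq_nonneg a.im, sq_nonneg b.re, sq_nonneg b.im]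
    have e4 : b.im = 0 := by nlinarith [sq_nonneg a.re, sq_nonneg a.im, sq_nonneg b.re, sq_nonneg b.im]
    rcases hab with hab | hab
    · exact hab (Complex.ext e1 e2)
    · exact hab (Complex.ext e3 e4)
  let n : Fin 3 → ℝ := fun i => (a.re * (z.1 i).re + a.im * (z.1 i).im + b.re * (z.2 i).re + b.im * (z.2 i).im) / N
  have hn : ∀ i, n i * N = a.re * (z.1 i).re + a.im * (z.1 i).im + b.re * (z.2 i).re + b.im * (z.2 i).im := by
    intro i; simp only [n]; field_simp
  have hzt : z = tens n a b := by
    have k : ∀ v0 v1 v2 v3 : ℝ, ∀ i, N * (v0 * (z.1 i).re + v1 * (z.1 i).im + v2 * (z.2 i).re + v3 * (z.2 i).im)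
        = (v0 * a.re + v1 * a.im + v2 * b.re + v3 * b.im) * (n i * N) := by
      intro v0 v1 v2 v3 i
      set s := (v0 * a.re + v1 * a.im + v2 * b.re + v3 * b.im) with hs
      have := h1 ![N * v0 - s * a.re, N * v1 - s * a.im, N * v2 - s * b.re, N * v3 - s * b.im]
        (by simp; linear_combination (-s) * hN - N * hs) i
      simp [R, cc] at this
      rw [hn]
      linear_combination this
    have k' : ∀ v0 v1 v2 v3 : ℝ, ∀ i, (v0 * (z.1 i).re + v1 * (z.1 i).im + v2 * (z.2 i).re + v3 * (z.2 i).im)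
        = (v0 * a.re + v1 * a.im + v2 * b.re + v3 * b.im) * n i := by
      intro v0 v1 v2 v3 i
      apply mul_left_cancel₀ hNpos
      rw [k]; ring
    ext i
    · have e1 := k' 1 0 0 0 i
      have e2 := k' 0 1 0 0 i
      simp at e1 e2
      apply Complex.ext <;> simp [tens, e1, e2] <;> ring
    · have e1 := k' 0 0 1 0 i
      have e2 := k' 0 0 0 1 i
      simp at e1 e2
      apply Complex.ext <;> simp [tens, e1, e2] <;> ring
  obtain ⟨s, hs, hh⟩ := mk_tens n
  refine ⟨s, hs, ?_⟩
  rw [← hh a b (tens_mem _ _ _)]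
  exact congrArg (Quot.mk relM) (Subtype.ext hzt)

section Yside

variable {m : ℕ} {H : Subgroup (Matrix.unitaryGroup (Fin m) ℂ)}

/-- class map -/
def mkY (H : Subgroup (Matrix.unitaryGroup (Fin m) ℂ)) (v : Fin m → ℂ) : Y m H := Quot.mk _ v

lemma mkY_eq {v w : Fin m → ℂ} (h : mkY H v = mkY H w) :
    ∃ h ∈ H, w = Matrix.mulVec (h : Matrix (Fin m) (Fin m) ℂ) v := by
  have e : Equivalence (relH m H) := by
    refine ⟨fun v => ⟨1, H.one_mem, by simp⟩, ?_, ?_⟩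
    · rintro v w ⟨h, hh, rfl⟩
      refine ⟨h⁻¹, H.inv_mem hh, ?_⟩
      rw [Matrix.mulVec_mulVec, ← Matrix.UnitaryGroup.mul_val]; simp
    · rintro v w u ⟨h, hh, rfl⟩ ⟨k, hk, rfl⟩
      refine ⟨k * h, H.mul_mem hk hh, ?_⟩
      rw [Matrix.mulVec_mulVec, ← Matrix.UnitaryGroup.mul_val]
  exact (e.eqvGen_iff).mp (Quot.eqvGen_exact h)

lemma mkY_smul (h : Matrix.unitaryGroup (Fin m) ℂ) (hh : h ∈ H) (v : Fin m → ℂ) :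
    mkY H (Matrix.mulVec (h : Matrix (Fin m) (Fin m) ℂ) v) = mkY H v :=
  (Quot.sound ⟨h, hh, rfl⟩).symm

lemma regY_of_quad {F : (Fin m → ℂ) → ℝ} (hF : IsQuad F)
    (hinv : ∀ h ∈ H, ∀ v, F (Matrix.mulVec (h : Matrix (Fin m) (Fin m) ℂ) v) = F v) :
    ∃ f ∈ RegY m H 2, ∀ v, f (mkY H v) = F v := by
  obtain ⟨p, hp, h⟩ := hF
  refine ⟨Quot.lift F ?_, ⟨p, hp, ?_, ?_⟩, ?_⟩
  · rintro v w ⟨k, hk, rfl⟩; rw [hinv k hk]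
  · intro k hk v; rw [h, h, hinv k hk]
  · intro v; exact (h v).symm
  · intro v; rfl

lemma regY_bilin {f : Y m H → ℝ} (hf : f ∈ RegY m H 2) :
    ∃ B : (Fin m → ℂ) →ₗ[ℝ] (Fin m → ℂ) →ₗ[ℝ] ℝ, ∀ x, f (mkY H x) = B x x := by
  obtain ⟨p, hp, _, h⟩ := hf
  obtain ⟨B, hB⟩ := evalR_bilin p hp
  exact ⟨B, fun x => by rw [← hB]; exact h x⟩

lemma sepY {χ : M₀ ≃ Y m H}
    (hχ : (fun f : Y m H → ℝ => f ∘ ⇑χ) '' RegY m H 2 = RegM 2)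
    {a b : ℂ} (hab : a ≠ 0 ∨ b ≠ 0) {w u u' : Fin m → ℂ} (c : ℝ)
    (hw : χ (φ a b) = mkY H w)
    (h : ∀ F ∈ RegY m H 2, F (mkY H u) + F (mkY H u') = c * F (mkY H w)) :
    ∃ μ : ℝ, 0 ≤ μ ∧ χ (φ (μ * a) (μ * b)) = mkY H u := by
  obtain ⟨μ, hμ, he⟩ := sepM (χ.symm (mkY H u)) a b hab (by
    intro ζ hζ f hf hfe
    have hf' := hf
    rw [← hχ] at hf'
    obtain ⟨F, hF, rfl⟩ := hf'
    have h1 := h F hF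
    have nn : ∀ x, 0 ≤ (F ∘ χ) x := by
      intro x
      obtain ⟨z, rfl⟩ := Quot.exists_rep x
      simp only [hfe]
      exact Finset.sum_nonneg fun i _ => mul_self_nonneg _
    have h2 : F (mkY H w) = 0 := by
      rw [← hw]
      change (F ∘ χ) (φ a b) = 0
      have := hfe ⟨tens (Pi.single 0 1) a b, tens_mem _ _ _⟩
      simp only [sum_R_tens, hζ] at this
      exact this.trans (by norm_num)
    have n1 := nn (χ.symm (mkY H u))
    have n2 := nn (χ.symm (mkY H u'))
    simp only [Function.comp, Equiv.apply_symm_apply] at *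
    rw [h2] at h1
    linarith)
  exact ⟨μ, hμ, by rw [← he]; simp⟩

lemma scaleY {χ : M₀ ≃ Y m H}
    (hχ : (fun f : Y m H → ℝ => f ∘ ⇑χ) '' RegY m H 2 = RegM 2)
    {a b : ℂ} (hab : a ≠ 0 ∨ b ≠ 0) {w u : Fin m → ℂ} (μ : ℝ) (hμ : 0 ≤ μ)
    (hw : χ (φ a b) = mkY H w) (hu : χ (φ (μ * a) (μ * b)) = mkY H u) :
    ∃ k ∈ H, u = μ • Matrix.mulVec (k : Matrix (Fin m) (Fin m) ℂ) w := by
  obtain ⟨μ', hμ', he⟩ := sepY hχ hab (u := μ • w) (u' := 0) (μ ^ 2) hw (by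
    intro F hF
    obtain ⟨B, hB⟩ := regY_bilin hF
    simp [hB]; ring)
  have hμμ : μ' = μ := by
    obtain ⟨f, hf, hfe⟩ := exists_f ![a.re, a.im, b.re, b.im]
    have hf' := hf
    rw [← hχ] at hf'
    obtain ⟨F, hF, rfl⟩ := hf'
    obtain ⟨B, hB⟩ := regY_bilin hF
    have e1 := hfe ⟨tens (Pi.single 0 1) a b, tens_mem _ _ _⟩
    have e2 := hfe ⟨tens (Pi.single 0 1) (μ' * a) (μ' * b), tens_mem _ _ _⟩
    simp only [sum_R_tens] at e1 e2
    change F (χ (φ a b)) = _ at e1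
    change F (χ (φ (μ' * a) (μ' * b))) = _ at e2
    rw [hw, hB] at e1
    rw [he, hB] at e2
    simp at e1 e2
    rw [e1] at e2
    have hN : 0 < a.re * a.re + a.im * a.im + b.re * b.re + b.im * b.im := by
      rcases hab with h | h
      · have := Complex.normSq_pos.mpr h
        rw [Complex.normSq_apply] at this
        nlinarith [mul_self_nonneg b.re, mul_self_nonneg b.im]
      · have := Complex.normSq_pos.mpr h
        rw [Complex.normSq_apply] at this
        nlinarith [mul_self_nonneg a.re, mul_self_nonneg a.im]
    have e3 : μ' * (a.re * a.re + a.im * a.im + b.re * b.re + b.im * b.im) =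
        μ * (a.re * a.re + a.im * a.im + b.re * b.re + b.im * b.im) := by
      rw [← sq_eq_sq₀ (by positivity) (by positivity)]
      linear_combination -e2
    exact mul_right_cancel₀ hN.ne' e3
  rw [hμμ, hu] at he
  obtain ⟨k, hk, hh⟩ := mkY_eq he.symm
  exact ⟨k, hk, by rw [hh, Matrix.mulVec_smul]⟩

lemma norm_unitary (h : Matrix.unitaryGroup (Fin m) ℂ) (w : Fin m → ℂ) :
    star (Matrix.mulVec (h : Matrix (Fin m) (Fin m) ℂ) w) ⬝ᵥ
      (Matrix.mulVec (h : Matrix (Fin m) (Fin m) ℂ) w) = star w ⬝ᵥ w := by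
  rw [Matrix.star_mulVec, Matrix.dotProduct_mulVec, Matrix.vecMul_vecMul]
  have : (h : Matrix (Fin m) (Fin m) ℂ).conjTranspose * (h : Matrix (Fin m) (Fin m) ℂ) = 1 :=
    Matrix.UnitaryGroup.star_mul_self h
  rw [this, Matrix.vecMul_one]

lemma eigY {χ : M₀ ≃ Y m H}
    (hχ : (fun f : Y m H → ℝ => f ∘ ⇑χ) '' RegY m H 2 = RegM 2)
    (hH : (H : Set (Matrix.unitaryGroup (Fin m) ℂ)).Finite)
    {a b : ℂ} (hab : a ≠ 0 ∨ b ≠ 0) {w : Fin m → ℂ}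
    (hw : χ (φ a b) = mkY H w) (h : Matrix.unitaryGroup (Fin m) ℂ) (hh : h ∈ H) :
    Matrix.mulVec (h : Matrix (Fin m) (Fin m) ℂ) w = w ∨
    Matrix.mulVec (h : Matrix (Fin m) (Fin m) ℂ) w = -w := by
  by_cases hw0 : w = 0
  · left; simp [hw0]
  set w' := Matrix.mulVec (h : Matrix (Fin m) (Fin m) ℂ) w with hw'
  have key : ∀ t : ℕ, ∃ k : H, ∃ μ : ℝ, w + (t : ℝ) • w' =
      μ • Matrix.mulVec ((k : Matrix.unitaryGroup (Fin m) ℂ) : Matrix (Fin m) (Fin m) ℂ) w := by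
    intro t
    obtain ⟨μ, hμ, he⟩ := sepY hχ hab (u := w + (t : ℝ) • w') (u' := (t : ℝ) • w - w') (2 * (1 + (t : ℝ) ^ 2)) hw (by
      intro F hF
      obtain ⟨B, hB⟩ := regY_bilin hF
      have e : F (mkY H w') = F (mkY H w) := by rw [hw', mkY_smul h hh]
      rw [hB, hB] at e
      simp only [hB, map_add, map_sub, map_smul, LinearMap.add_apply, LinearMap.sub_apply, LinearMap.smul_apply, smul_eq_mul]
      linear_combination (1 + (t : ℝ) ^ 2) * e)
    obtain ⟨k, hk, hu⟩ := scaleY hχ hab μ hμ hw he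
    exact ⟨⟨k, hk⟩, μ, hu⟩
  choose k μ hk using key
  have : Finite H := hH
  obtain ⟨t, t', htt, hkk⟩ := Finite.exists_ne_map_eq_of_infinite k
  have e1 := hk t
  have e2 := hk t'
  rw [← hkk] at e2
  set y := Matrix.mulVec ((k t : Matrix.unitaryGroup (Fin m) ℂ) : Matrix (Fin m) (Fin m) ℂ) w
  have hd : (t : ℝ) - t' ≠ 0 := sub_ne_zero.mpr (by exact_mod_cast htt)
  have f1 : ((t : ℝ) - t') • w' = (μ t - μ t') • y := by
    rw [sub_smul, sub_smul, ← e1, ← e2]; abel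
  have f2 : ((t : ℝ) - t') • w = (t * μ t' - t' * μ t) • y := by
    rw [sub_smul, sub_smul, mul_smul, mul_smul, ← e1, ← e2, smul_add, smul_add, smul_smul, smul_smul, mul_comm (t : ℝ) t']; abel
  have hne : (t * μ t' - t' * μ t) ≠ 0 := by
    intro h0
    rw [h0, zero_smul] at f2
    exact hw0 ((smul_eq_zero.mp f2).resolve_left hd)
  obtain ⟨c, hc⟩ : ∃ c : ℝ, w' = c • w := by
    refine ⟨(μ t - μ t') / (t * μ t' - t' * μ t), ?_⟩
    have : ((t : ℝ) - t') • w' = ((t : ℝ) - t') • (((μ t - μ t') / (t * μ t' - t' * μ t)) • w) := by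
      rw [smul_comm, f2, f1, smul_smul, div_mul_cancel₀ _ hne]
    exact smul_right_injective _ hd this
  have hn := norm_unitary h w
  rw [← hw', hc] at hn
  have hs : star w ⬝ᵥ w ≠ 0 := by
    open scoped ComplexOrder in
    rwa [Ne, dotProduct_star_self_eq_zero]
  have hc2 : (c : ℂ) * c = 1 := by
    apply mul_right_cancel₀ hs
    rw [one_mul]
    conv_rhs => rw [← hn]
    simp only [dotProduct, Finset.mul_sum]
    refine Finset.sum_congr rfl fun i _ => ?_
    simp; ring
  have hc3 : c * c = 1 := by exact_mod_cast hc2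
  rcases mul_self_eq_one_iff.mp hc3 with h1 | h1
  · left; rw [hc, h1, one_smul]
  · right; rw [hc, h1, neg_one_smul]


/-- coordinates of rank one points -/
def sub4 : (Fin 3 ⊕ Fin 3) × Bool → MvPolynomial (Fin 4) ℝ
  | (.inl i, false) => if i = 0 then X 0 else 0
  | (.inl i, true) => if i = 0 then X 1 else 0
  | (.inr i, false) => if i = 0 then X 2 else 0
  | (.inr i, true) => if i = 0 then X 3 else 0

lemma eval_sub4 (p : MvPolynomial ((Fin 3 ⊕ Fin 3) × Bool) ℝ) (x : Fin 4 → ℝ) :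
    eval x (bind₁ sub4 p) =
      evalR p (cc (tens (Pi.single 0 1) (Complex.mk (x 0) (x 1)) (Complex.mk (x 2) (x 3)))) := by
  change aeval x (bind₁ sub4 p) = aeval (rl _ _) p
  rw [MvPolynomial.aeval_bind₁]
  congr 2
  funext q
  rcases q with ⟨i | i, b⟩ <;> cases b <;> by_cases hi : i = 0 <;>
    simp [sub4, rl, cc, tens, Pi.single_apply, hi]

lemma regM_prod {f g : M₀ → ℝ} (hf : f ∈ RegM 2) (hg : g ∈ RegM 2)
    (h : ∀ a b, f (φ a b) * g (φ a b) = 0) : f = 0 ∨ g = 0 := by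
  obtain ⟨p, hp, hpi, hfp⟩ := hf
  obtain ⟨q, hq, hqi, hgq⟩ := hg
  have hprod : bind₁ sub4 p * bind₁ sub4 q = 0 := by
    apply MvPolynomial.funext
    intro x
    rw [map_mul, eval_sub4, eval_sub4, map_zero]
    have := h (Complex.mk (x 0) (x 1)) (Complex.mk (x 2) (x 3))
    unfold φ at this
    rwa [hfp, hgq] at this
  rcases mul_eq_zero.mp hprod with h0 | h0
  · left
    refine regM_zero ⟨p, hp, hpi, hfp⟩ fun a b => ?_
    have := eval_sub4 p ![a.re, a.im, b.re, b.im]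
    rw [h0, map_zero] at this
    unfold φ
    rw [hfp, this]; simp
  · right
    refine regM_zero ⟨q, hq, hqi, hgq⟩ fun a b => ?_
    have := eval_sub4 q ![a.re, a.im, b.re, b.im]
    rw [h0, map_zero] at this
    unfold φ
    rw [hgq, this]; simp

/-- the matrix `hk + εk` -/
def NN (h k : Matrix.unitaryGroup (Fin m) ℂ) (ε : ℂ) : Matrix (Fin m) (Fin m) ℂ :=
  (h : Matrix (Fin m) (Fin m) ℂ) * k + ε • (k : Matrix (Fin m) (Fin m) ℂ)

/-- the averaged quadratic function -/
def FF (H : Subgroup (Matrix.unitaryGroup (Fin m) ℂ)) [Fintype H]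
    (h : Matrix.unitaryGroup (Fin m) ℂ) (ε : ℂ) (w : Fin m → ℂ) : ℝ :=
  ∑ k : H, ∑ i, Complex.normSq ((NN h k ε).mulVec w i)

lemma FF_quad [Fintype H] (h : Matrix.unitaryGroup (Fin m) ℂ) (ε : ℂ) : IsQuad (FF H h ε) := by
  refine IsQuad.sum _ fun k _ => IsQuad.sum _ fun i _ => ?_
  let L : (Fin m → ℂ) →ₗ[ℝ] ℂ :=
    ((LinearMap.proj i).comp (Matrix.mulVecLin (NN h k ε))).restrictScalars ℝ
  obtain ⟨p, hp, h1⟩ := IsQuad.mul (Complex.reLm.comp L) (Complex.reLm.comp L)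
  obtain ⟨q, hq, h2⟩ := IsQuad.mul (Complex.imLm.comp L) (Complex.imLm.comp L)
  refine ⟨p + q, hp.add hq, fun z => ?_⟩
  refine Eq.trans ?_ (Complex.normSq_apply _).symm
  rw [evalR_eq, map_add]
  exact congrArg₂ (· + ·) (h1 z) (h2 z)

lemma FF_inv [Fintype H] (h : Matrix.unitaryGroup (Fin m) ℂ) (ε : ℂ) :
    ∀ l ∈ H, ∀ v, FF H h ε (Matrix.mulVec (l : Matrix (Fin m) (Fin m) ℂ) v) = FF H h ε v := by
  intro l hl v
  unfold FF
  refine Fintype.sum_equiv (Equiv.mulRight ⟨l, hl⟩) _ _ fun k => ?_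
  refine Finset.sum_congr rfl fun i _ => ?_
  rw [Matrix.mulVec_mulVec]
  congr 3
  simp [NN, add_mul, mul_assoc]

lemma FF_zero [Fintype H] (h : Matrix.unitaryGroup (Fin m) ℂ) (ε : ℂ) (w : Fin m → ℂ)
    (h0 : FF H h ε w = 0) : Matrix.mulVec (h : Matrix (Fin m) (Fin m) ℂ) w = -(ε • w) := by
  unfold FF at h0
  rw [Finset.sum_eq_zero_iff_of_nonneg
    (fun k _ => Finset.sum_nonneg fun i _ => Complex.normSq_nonneg _)] at h0
  have h1 := h0 1 (Finset.mem_univ _)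
  rw [Finset.sum_eq_zero_iff_of_nonneg (fun i _ => Complex.normSq_nonneg _)] at h1
  funext i
  have := Complex.normSq_eq_zero.mp (h1 i (Finset.mem_univ _))
  simp [NN, Matrix.add_mulVec, Matrix.smul_mulVec] at this
  simp
  linear_combination this

lemma FF_eig [Fintype H] (h : Matrix.unitaryGroup (Fin m) ℂ) (ε : ℂ) (w : Fin m → ℂ)
    (h0 : Matrix.mulVec (h : Matrix (Fin m) (Fin m) ℂ) w = -(ε • w))
    (hk : ∀ k ∈ H, Matrix.mulVec (k : Matrix (Fin m) (Fin m) ℂ) w = w ∨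
      Matrix.mulVec (k : Matrix (Fin m) (Fin m) ℂ) w = -w) : FF H h ε w = 0 := by
  refine Finset.sum_eq_zero fun k _ => Finset.sum_eq_zero fun i _ => ?_
  rw [Complex.normSq_eq_zero]
  rw [NN, Matrix.add_mulVec, ← Matrix.mulVec_mulVec, Matrix.smul_mulVec]
  rcases hk k k.2 with e | e <;> rw [e]
  · rw [h0]; simp
  · rw [Matrix.mulVec_neg, h0]; simp

lemma H_pm {χ : M₀ ≃ Y m H}
    (hχ : (fun f : Y m H → ℝ => f ∘ ⇑χ) '' RegY m H 2 = RegM 2)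
    (hH : (H : Set (Matrix.unitaryGroup (Fin m) ℂ)).Finite)
    (h : Matrix.unitaryGroup (Fin m) ℂ) (hh : h ∈ H) :
    (∀ w, Matrix.mulVec (h : Matrix (Fin m) (Fin m) ℂ) w = w) ∨
    (∀ w, Matrix.mulVec (h : Matrix (Fin m) (Fin m) ℂ) w = -w) := by
  have hfin : Finite H := hH
  have := Fintype.ofFinite H
  obtain ⟨f, hf, hfe⟩ := regY_of_quad (H := H) (FF_quad (H := H) h 1) (FF_inv h 1)
  obtain ⟨g, hg, hge⟩ := regY_of_quad (H := H) (FF_quad (H := H) h (-1)) (FF_inv h (-1))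
  have hf' : f ∘ χ ∈ RegM 2 := hχ ▸ ⟨f, hf, rfl⟩
  have hg' : g ∘ χ ∈ RegM 2 := hχ ▸ ⟨g, hg, rfl⟩
  have z0 : (f ∘ χ) (φ 0 0) = 0 := by
    obtain ⟨p, hp, -, hfp⟩ := hf'
    unfold φ
    rw [hfp]
    obtain ⟨B, hB⟩ := cc_bilin p hp
    have : tens (Pi.single 0 1) 0 0 = 0 := by ext i <;> simp [tens]
    simp [hB, this]
  have hp := regM_prod hf' hg' (by
    intro a b
    by_cases hab : a ≠ 0 ∨ b ≠ 0
    · obtain ⟨w, hw⟩ := Quot.exists_rep (χ (φ a b))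
      have hw : χ (φ a b) = mkY H w := hw.symm
      have hk := fun k hk => eigY hχ hH hab hw k hk
      simp only [Function.comp, hw, hfe, hge]
      rcases hk h hh with e | e
      · rw [FF_eig h (-1) w (by rw [e]; simp) hk, mul_zero]
      · rw [FF_eig h 1 w (by rw [e]; simp) hk, zero_mul]
    · push Not at hab
      rw [hab.1, hab.2, z0, zero_mul])
  rcases hp with h0 | h0
  · right
    intro w
    have := congrFun h0 (χ.symm (mkY H w))
    simp [hfe] at this
    simpa using FF_zero h 1 w this
  · left
    intro w
    have := congrFun h0 (χ.symm (mkY H w))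
    simp [hge] at this
    simpa using FF_zero h (-1) w this

lemma regY_all {χ : M₀ ≃ Y m H}
    (hχ : (fun f : Y m H → ℝ => f ∘ ⇑χ) '' RegY m H 2 = RegM 2)
    (hH : (H : Set (Matrix.unitaryGroup (Fin m) ℂ)).Finite)
    {F : (Fin m → ℂ) → ℝ} (hF : IsQuad F) : ∃ f ∈ RegY m H 2, ∀ v, f (mkY H v) = F v := by
  refine regY_of_quad hF fun h hh v => ?_
  obtain ⟨B, hB⟩ := hF.bilin
  rcases H_pm hχ hH h hh with e | e <;> rw [e]
  simp [hB]

lemma main {χ : M₀ ≃ Y m H}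
    (hχ : (fun f : Y m H → ℝ => f ∘ ⇑χ) '' RegY m H 2 = RegM 2)
    (hH : (H : Set (Matrix.unitaryGroup (Fin m) ℂ)).Finite) : False := by
  have hc : ((Pi.single 0 1, Pi.single 1 1) : (Fin 3 → ℂ) × (Fin 3 → ℂ)) ∈ M := by
    intro ξ _
    simp [pair, Matrix.mulVec, dotProduct, Fin.sum_univ_three, Pi.single_apply]
  let xc : M₀ := Quot.mk _ ⟨_, hc⟩
  let xa : M₀ := Quot.mk _ ⟨tens (Pi.single 0 1) 1 0, tens_mem _ _ _⟩
  let xb : M₀ := Quot.mk _ ⟨tens (Pi.single 1 1) 0 1, tens_mem _ _ _⟩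
  have hadd : ∀ f ∈ RegM 2, f xc = f xa + f xb := by
    rintro f ⟨p, hp, hinv, hfp⟩
    simp only [xc, xa, xb, hfp]
    rw [quad_rows p hp hinv]
    obtain ⟨B, hB⟩ := cc_bilin p hp
    have : tens (Pi.single 2 1) 0 0 = 0 := by ext i <;> simp [tens]
    simp [hB, this]
  obtain ⟨c, hc'⟩ := Quot.exists_rep (χ xc)
  obtain ⟨a, ha'⟩ := Quot.exists_rep (χ xa)
  obtain ⟨b, hb'⟩ := Quot.exists_rep (χ xb)
  have hc' : mkY H c = χ xc := hc'
  have ha' : mkY H a = χ xa := ha'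
  have hb' : mkY H b = χ xb := hb'
  have hquad : ∀ F : (Fin m → ℂ) → ℝ, IsQuad F → F c = F a + F b := by
    intro F hF
    obtain ⟨f, hf, hfe⟩ := regY_all hχ hH hF
    have := hadd (f ∘ χ) (hχ ▸ ⟨f, hf, rfl⟩)
    simp only [Function.comp, ← hc', ← ha', ← hb', hfe] at this
    exact this
  have hcoord : ∀ i j, rl _ c i * rl _ c j = rl _ a i * rl _ a j + rl _ b i * rl _ b j := by
    intro i j
    exact hquad _ (IsQuad.mul ((LinearMap.proj i).comp (rl (Fin m))) ((LinearMap.proj j).comp (rl (Fin m))))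
  have hminor : ∀ i j, rl _ a i * rl _ b j = rl _ a j * rl _ b i := by
    intro i j
    have e1 := hcoord i i
    have e2 := hcoord j j
    have e3 := hcoord i j
    have : (rl _ a i * rl _ b j - rl _ a j * rl _ b i) ^ 2 = 0 := by
      linear_combination (-(rl _ a j * rl _ a j + rl _ b j * rl _ b j)) * e1 -
        (rl _ c i * rl _ c i) * e2 + (rl _ c i * rl _ c j + (rl _ a i * rl _ a j + rl _ b i * rl _ b j)) * e3
    exact sub_eq_zero.mp (pow_eq_zero_iff (by norm_num) |>.mp this)
  obtain ⟨f1, hf1, hf1e⟩ := exists_f ![1, 0, 0, 0]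
  obtain ⟨f2, hf2, hf2e⟩ := exists_f ![0, 0, 1, 0]
  rw [← hχ] at hf1 hf2
  obtain ⟨q1, hq1, rfl⟩ := hf1
  obtain ⟨q2, hq2, rfl⟩ := hf2
  obtain ⟨B1, hB1⟩ := regY_bilin hq1
  obtain ⟨B2, hB2⟩ := regY_bilin hq2
  have v1a : B1 a a = 1 := by
    rw [← hB1, ha']
    refine (hf1e _).trans ?_
    simp [R, cc, tens, Fin.sum_univ_three, Pi.single_apply]
  have v1b : B1 b b = 0 := by
    rw [← hB1, hb']
    refine (hf1e _).trans ?_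
    simp [R, cc, tens, Fin.sum_univ_three, Pi.single_apply]
  have v2b : B2 b b = 1 := by
    rw [← hB2, hb']
    refine (hf2e _).trans ?_
    simp [R, cc, tens, Fin.sum_univ_three, Pi.single_apply]
  have rinj : Function.Injective (rl (Fin m)) := by
    intro x y hxy
    funext i
    apply Complex.ext
    · simpa [rl] using congrFun hxy (i, false)
    · simpa [rl] using congrFun hxy (i, true)
  have hb0 : rl _ b ≠ 0 := by
    intro h0
    have : b = 0 := rinj (by rw [h0, map_zero])
    rw [this] at v2b
    simp at v2b
  obtain ⟨j, hj⟩ := Function.ne_iff.mp hb0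
  have hj : rl _ b j ≠ 0 := hj
  have hab : a = (rl _ a j / rl _ b j) • b := by
    apply rinj
    funext i
    rw [map_smul, Pi.smul_apply, smul_eq_mul]
    have := hminor i j
    field_simp
    linarith
  rw [hab] at v1a
  simp [v1b] at v1a

end Yside

/-- There is no ℤ-graded regular diffeomorphism from the symplectic quotient of the
SO(3)-module ℂ³ ⊕ ℂ³ (i.e. the SU(2)-module 2R₂) to any linear symplectic orbifold. -/
theorem no_graded_regular_diffeomorphism_2R2
    (m : ℕ) (hm : 1 ≤ m) (H : Subgroup (Matrix.unitaryGroup (Fin m) ℂ))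
    (hH : (H : Set (Matrix.unitaryGroup (Fin m) ℂ)).Finite) :
    ¬ ∃ χ : M₀ ≃ₜ Y m H,
        ∀ d : ℕ, (fun f : Y m H → ℝ => f ∘ ⇑χ) '' RegY m H d = RegM d := by
  rintro ⟨χ, hχ⟩
  exact main (χ := χ.toEquiv) (hχ 2) hH

end

end Stmt8
end

section
/- Let SO(3) act on V = ℂ³ by matrix multiplication (the complexified standard action), with moment map J : ℂ³ → so(3)*, J(z)(ξ) = Im⟨ξz, z⟩ for ξ ∈ so(3), where ⟨u,v⟩ = Σᵢ uᵢ\overline{vᵢ}, and set M = J⁻¹(0), M₀ = M/SO(3). Let Γ = {±1} act on ℂ by multiplication, with orbit space ℂ/Γ. Then there exists a ℤ-graded regular diffeomorphism from M₀ to ℂ/Γ. -/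
/-!
Statement 14: The symplectic quotient of the SO(3)-module ℂ³ (the SU(2)-module R₂), with
moment map `J(z)(ξ) = Im⟨ξz, z⟩`, is ℤ-graded regularly diffeomorphic to `ℂ/{±1}`.
-/

namespace Stmt14

noncomputable section

open MvPolynomial Complex

/-- Evaluation of a real polynomial in the real coordinates (indexed by `ι × Bool`) at a
point of `ι → ℂ`. -/
def evalR {ι : Type} (p : MvPolynomial (ι × Bool) ℝ) (z : ι → ℂ) : ℝ :=
  MvPolynomial.eval (fun q => if q.2 then (z q.1).im else (z q.1).re) p

/-- The special orthogonal group SO(3) as a set of real matrices. -/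
def SO3 : Set (Matrix (Fin 3) (Fin 3) ℝ) :=
  {g | g * g.transpose = 1 ∧ g.det = 1}

/-- The action of a real matrix `g` on ℂ³. -/
def act (g : Matrix (Fin 3) (Fin 3) ℝ) (z : Fin 3 → ℂ) : Fin 3 → ℂ :=
  (g.map Complex.ofReal).mulVec z

/-- The zero set `M = J⁻¹(0)` of the moment map `J(z)(ξ) = Im⟨ξz, z⟩`, `ξ` ranging over
`so(3)` (real skew-symmetric matrices). -/
def Mset : Set (Fin 3 → ℂ) :=
  {z | ∀ ξ : Matrix (Fin 3) (Fin 3) ℝ, ξ.transpose = -ξ →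
    (∑ i, (ξ.map Complex.ofReal).mulVec z i * (starRingEnd ℂ) (z i)).im = 0}

/-- Orbit equivalence on `M` for the SO(3)-action. -/
def relM (x y : Mset) : Prop :=
  ∃ g ∈ SO3, (y : Fin 3 → ℂ) = act g (x : Fin 3 → ℂ)

/-- The symplectic quotient `M₀ = M/SO(3)` with the quotient topology. -/
def M₀ : Type := Quot relM

instance : TopologicalSpace M₀ := instTopologicalSpaceQuot

/-- The degree-`d` regular functions on `M₀`. -/
def RegM (d : ℕ) : Set (M₀ → ℝ) :=
  {f | ∃ p : MvPolynomial (Fin 3 × Bool) ℝ, p.IsHomogeneous d ∧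
    (∀ g ∈ SO3, ∀ z : Fin 3 → ℂ, evalR p (act g z) = evalR p z) ∧
    ∀ x : Mset, f (Quot.mk _ x) = evalR p (x : Fin 3 → ℂ)}

/-- Orbit equivalence on ℂ for the action of `Γ = {±1}`. -/
def relC (z v : ℂ) : Prop := v = z ∨ v = -z

/-- The orbifold `ℂ/{±1}` with the quotient topology. -/
def Y : Type := Quot relC

instance : TopologicalSpace Y := instTopologicalSpaceQuot

/-- The degree-`d` regular functions on `ℂ/{±1}`. -/
def RegY (d : ℕ) : Set (Y → ℝ) :=
  {f | ∃ p : MvPolynomial (Unit × Bool) ℝ, p.IsHomogeneous d ∧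
    (∀ z : ℂ, evalR p (fun _ => -z) = evalR p (fun _ => z)) ∧
    ∀ z : ℂ, f (Quot.mk _ z) = evalR p (fun _ => z)}

/-- The base point embedding. -/
def emb (w : ℂ) : Fin 3 → ℂ := ![w, 0, 0]

theorem emb_mem (w : ℂ) : emb w ∈ Mset := by
  intro ξ h
  have h0 : ξ 0 0 = 0 := by
    have := congrFun (congrFun h 0) 0
    simp at this
    linarith
  simp [Fin.sum_univ_three, emb, Matrix.mulVec, dotProduct, h0]

theorem mem_cross {z : Fin 3 → ℂ} (hz : z ∈ Mset) (i j : Fin 3) :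
    (z i).re * (z j).im = (z j).re * (z i).im := by
  have h01 := hz !![0, 1, 0; -1, 0, 0; 0, 0, 0] (by
    ext i j; fin_cases i <;> fin_cases j <;> simp)
  have h02 := hz !![0, 0, 1; 0, 0, 0; -1, 0, 0] (by
    ext i j; fin_cases i <;> fin_cases j <;> simp)
  have h12 := hz !![0, 0, 0; 0, 0, 1; 0, -1, 0] (by
    ext i j; fin_cases i <;> fin_cases j <;> simp)
  simp [Fin.sum_univ_three, Matrix.mulVec, dotProduct] at h01 h02 h12
  fin_cases i <;> fin_cases j <;> simp <;> linarith

theorem exists_rot_aux (a b c : ℝ) (h : a ^ 2 + b ^ 2 + c ^ 2 = 1) (ha : 0 ≤ a) :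
    ∃ g ∈ SO3, g 0 0 = a ∧ g 1 0 = b ∧ g 2 0 = c := by
  have h1 : (1 + a) ≠ 0 := by positivity
  obtain ⟨t, ht⟩ : ∃ t, t * (1 + a) = 1 := ⟨(1 + a)⁻¹, by field_simp⟩
  have hb : b ^ 2 = 1 - a ^ 2 - c ^ 2 := by linarith
  have key : t * (b ^ 2 + c ^ 2) = 1 - a := by
    linear_combination t * h + (1 - a) * ht
  refine ⟨!![a, -b, -c; b, 1 - t * b ^ 2, - t * b * c; c, - t * b * c, 1 - t * c ^ 2],
    ⟨?_, ?_⟩, by simp, by simp, by simp⟩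
  · ext i j
    fin_cases i <;> fin_cases j <;>
      simp [Matrix.mul_apply, Fin.sum_univ_three]
    · linear_combination h
    · linear_combination b * key
    · linear_combination c * key
    · linear_combination b * key
    · linear_combination t * b ^ 2 * key - b ^ 2 * ht
    · linear_combination t * b * c * key - b * c * ht
    · linear_combination c * key
    · linear_combination t * b * c * key - b * c * ht
    · linear_combination t * c ^ 2 * key - c ^ 2 * ht
  · simp [Matrix.det_fin_three]
    linear_combination h - a * key

theorem act_emb (g : Matrix (Fin 3) (Fin 3) ℝ) (w : ℂ) (i : Fin 3) :
    act g (emb w) i = (g i 0 : ℂ) * w := by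
  simp [act, emb, Matrix.mulVec, dotProduct, Fin.sum_univ_three]

theorem exists_of_unit (z : Fin 3 → ℂ) (u : Fin 3 → ℝ) (hu : u 0 ^ 2 + u 1 ^ 2 + u 2 ^ 2 = 1)
    (w : ℂ) (hz : ∀ i, z i = (u i : ℂ) * w) :
    ∃ g ∈ SO3, ∃ w, z = act g (emb w) := by
  rcases le_total 0 (u 0) with h | h
  · obtain ⟨g, hg, h0, h1, h2⟩ := exists_rot_aux _ _ _ hu h
    refine ⟨g, hg, w, ?_⟩
    ext i
    rw [act_emb, hz]
    fin_cases i <;> simp [h0, h1, h2]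
  · obtain ⟨g, hg, h0, h1, h2⟩ := exists_rot_aux (-u 0) (-u 1) (-u 2) (by simpa using hu)
      (by linarith)
    refine ⟨g, hg, -w, ?_⟩
    ext i
    rw [act_emb, hz]
    fin_cases i <;> simp [h0, h1, h2]

theorem exists_of_vec (z : Fin 3 → ℂ) (v : Fin 3 → ℝ) (hv : v ≠ 0)
    (hz : ∀ i j, z i * (v j : ℂ) = z j * (v i : ℂ)) :
    ∃ g ∈ SO3, ∃ w, z = act g (emb w) := by
  have hpos : 0 < v 0 ^ 2 + v 1 ^ 2 + v 2 ^ 2 := by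
    by_contra hn
    apply hv
    ext i
    fin_cases i <;> simp <;> nlinarith [sq_nonneg (v 0), sq_nonneg (v 1), sq_nonneg (v 2)]
  set s := v 0 ^ 2 + v 1 ^ 2 + v 2 ^ 2 with hs
  obtain ⟨r, hr, hrs⟩ : ∃ r : ℝ, 0 < r ∧ r ^ 2 = s :=
    ⟨√s, Real.sqrt_pos.2 hpos, Real.sq_sqrt hpos.le⟩
  have hrc : (r : ℂ) ≠ 0 := by exact_mod_cast hr.ne'
  have hrsc : (r : ℂ) ^ 2 = (v 0 : ℂ) ^ 2 + (v 1 : ℂ) ^ 2 + (v 2 : ℂ) ^ 2 := by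
    rw [hs] at hrs; exact_mod_cast hrs
  refine exists_of_unit z (fun i => v i / r) ?_
    ((z 0 * v 0 + z 1 * v 1 + z 2 * v 2) / r) ?_
  · simp only [div_pow, hrs]
    rw [← add_div, ← add_div, ← hs, div_self hpos.ne']
  · intro i
    push_cast
    field_simp
    rw [hrsc]
    linear_combination (v 0 : ℂ) * hz i 0 + (v 1 : ℂ) * hz i 1 + (v 2 : ℂ) * hz i 2

theorem one_mem : (1 : Matrix (Fin 3) (Fin 3) ℝ) ∈ SO3 := by
  simp [SO3]

theorem exists_rep {z : Fin 3 → ℂ} (hz : z ∈ Mset) :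
    ∃ g ∈ SO3, ∃ w, z = act g (emb w) := by
  have hc := mem_cross hz
  by_cases h1 : (fun i => (z i).re) = 0
  · by_cases h2 : (fun i => (z i).im) = 0
    · refine ⟨1, one_mem, 0, ?_⟩
      ext i
      rw [act_emb]
      have a := congrFun h1 i
      have b := congrFun h2 i
      simp at a b
      apply Complex.ext <;> simp [a, b]
    · refine exists_of_vec z _ h2 fun i j => ?_
      apply Complex.ext <;> simp
      · linarith [hc i j]
      · ring
  · refine exists_of_vec z _ h1 fun i j => ?_
    apply Complex.ext <;> simp
    · ring
    · linarith [hc i j]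

theorem act_re (g : Matrix (Fin 3) (Fin 3) ℝ) (z : Fin 3 → ℂ) :
    (fun i => (act g z i).re) = g.mulVec (fun i => (z i).re) := by
  ext i; simp [act, Matrix.mulVec, dotProduct]

theorem act_im (g : Matrix (Fin 3) (Fin 3) ℝ) (z : Fin 3 → ℂ) :
    (fun i => (act g z i).im) = g.mulVec (fun i => (z i).im) := by
  ext i; simp [act, Matrix.mulVec, dotProduct]

theorem dot_inv {g : Matrix (Fin 3) (Fin 3) ℝ} (hg : g ∈ SO3) (x y : Fin 3 → ℝ) :
    g.mulVec x ⬝ᵥ g.mulVec y = x ⬝ᵥ y := by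
  have h : g.transpose * g = 1 := mul_eq_one_comm.1 hg.1
  rw [Matrix.dotProduct_mulVec, ← Matrix.mulVec_transpose, Matrix.mulVec_mulVec, h,
    Matrix.one_mulVec]

/-- Coordinate vector: real or imaginary part. -/
def part (b : Bool) (z : Fin 3 → ℂ) : Fin 3 → ℝ := fun i => if b then (z i).im else (z i).re

theorem part_act (b : Bool) (g : Matrix (Fin 3) (Fin 3) ℝ) (z : Fin 3 → ℂ) :
    part b (act g z) = g.mulVec (part b z) := by
  cases b
  · exact act_re g z
  · exact act_im g z

/-- The quadratic invariants. -/
def dotP (b c : Bool) : MvPolynomial (Fin 3 × Bool) ℝ := ∑ i, X (i, b) * X (i, c)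

theorem evalR_dotP (b c : Bool) (z : Fin 3 → ℂ) :
    evalR (dotP b c) z = part b z ⬝ᵥ part c z := by
  simp [evalR, dotP, part, dotProduct]

theorem dotP_hom (b c : Bool) : (dotP b c).IsHomogeneous 2 :=
  IsHomogeneous.sum _ _ _ fun i _ => (isHomogeneous_X ℝ (i, b)).mul (isHomogeneous_X ℝ (i, c))

theorem dotP_inv (b c : Bool) {g : Matrix (Fin 3) (Fin 3) ℝ} (hg : g ∈ SO3) (z : Fin 3 → ℂ) :
    evalR (dotP b c) (act g z) = evalR (dotP b c) z := by
  rw [evalR_dotP, evalR_dotP, part_act, part_act, dot_inv hg]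

theorem evalR_dotP_emb (b c : Bool) (w : ℂ) :
    evalR (dotP b c) (emb w) = (if b then w.im else w.re) * (if c then w.im else w.re) := by
  simp [evalR_dotP, part, emb, dotProduct, Fin.sum_univ_three]

/-- The lift of a monomial in `re`, `im`. -/
def liftMon (m : Unit × Bool →₀ ℕ) : MvPolynomial (Fin 3 × Bool) ℝ :=
  dotP false false ^ (m ((), false) / 2) * dotP true true ^ (m ((), true) / 2) *
    dotP false true ^ (m ((), false) % 2)

/-- The lift of a polynomial. -/
def liftP (p : MvPolynomial (Unit × Bool) ℝ) : MvPolynomial (Fin 3 × Bool) ℝ :=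
  ∑ m ∈ p.support, C (coeff m p) * liftMon m

theorem evalR_liftP (p : MvPolynomial (Unit × Bool) ℝ) (z : Fin 3 → ℂ) :
    evalR (liftP p) z = ∑ m ∈ p.support, coeff m p *
      (evalR (dotP false false) z ^ (m ((), false) / 2) *
        evalR (dotP true true) z ^ (m ((), true) / 2) *
        evalR (dotP false true) z ^ (m ((), false) % 2)) := by
  simp [evalR, liftP, liftMon]

theorem liftP_inv (p : MvPolynomial (Unit × Bool) ℝ) {g : Matrix (Fin 3) (Fin 3) ℝ}
    (hg : g ∈ SO3) (z : Fin 3 → ℂ) : evalR (liftP p) (act g z) = evalR (liftP p) z := by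
  simp only [evalR_liftP, dotP_inv _ _ hg]

theorem sum_exp {p : MvPolynomial (Unit × Bool) ℝ} {d : ℕ} (hp : p.IsHomogeneous d)
    {m : Unit × Bool →₀ ℕ} (hm : m ∈ p.support) : m ((), false) + m ((), true) = d := by
  have h := hp (mem_support_iff.1 hm)
  rw [← h, Finsupp.weight_apply, Finsupp.sum_fintype _ _ (by simp)]
  simp [Fintype.sum_prod_type, add_comm]

theorem liftP_hom {p : MvPolynomial (Unit × Bool) ℝ} {d : ℕ} (hp : p.IsHomogeneous d)
    (hd : Even d) : (liftP p).IsHomogeneous d := by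
  refine IsHomogeneous.sum _ _ _ fun m hm => ?_
  have h := sum_exp hp hm
  have h1 : (liftMon m).IsHomogeneous d := by
    have := ((((dotP_hom false false).pow (m ((), false) / 2)).mul
      ((dotP_hom true true).pow (m ((), true) / 2))).mul
      ((dotP_hom false true).pow (m ((), false) % 2)))
    have e : 2 * (m ((), false) / 2) + 2 * (m ((), true) / 2) + 2 * (m ((), false) % 2) = d := by
      obtain ⟨k, hk⟩ := hd
      omega
    rw [e] at this
    exact this
  simpa using (isHomogeneous_C (Fin 3 × Bool) (coeff m p)).mul h1

theorem evalR_unit (p : MvPolynomial (Unit × Bool) ℝ) (w : ℂ) :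
    evalR p (fun _ => w) =
      ∑ m ∈ p.support, coeff m p * (w.re ^ m ((), false) * w.im ^ m ((), true)) := by
  rw [evalR, eval_eq']
  refine Finset.sum_congr rfl fun m _ => ?_
  simp [Fintype.prod_prod_type, mul_comm]

theorem liftP_emb {p : MvPolynomial (Unit × Bool) ℝ} {d : ℕ} (hp : p.IsHomogeneous d)
    (hd : Even d) (w : ℂ) : evalR (liftP p) (emb w) = evalR p (fun _ => w) := by
  rw [evalR_liftP, evalR_unit]
  refine Finset.sum_congr rfl fun m hm => ?_
  have h := sum_exp hp hm
  congr 1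
  simp only [evalR_dotP_emb, if_true, Bool.false_eq_true, if_false]
  obtain ⟨k, hk⟩ := hd
  have e1 : m ((), false) = 2 * (m ((), false) / 2) + m ((), false) % 2 := by omega
  have e2 : m ((), true) = 2 * (m ((), true) / 2) + m ((), false) % 2 := by omega
  conv_rhs => rw [e1, e2]
  rw [pow_add, pow_add, pow_mul, pow_mul]
  ring

theorem odd_zero {p : MvPolynomial (Unit × Bool) ℝ} {d : ℕ} (hp : p.IsHomogeneous d)
    (hd : ¬ Even d) (hev : ∀ z : ℂ, evalR p (fun _ => -z) = evalR p (fun _ => z)) (w : ℂ) :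
    evalR p (fun _ => w) = 0 := by
  have h : evalR p (fun _ => -w) = - evalR p (fun _ => w) := by
    rw [evalR_unit, evalR_unit, ← Finset.sum_neg_distrib]
    refine Finset.sum_congr rfl fun m hm => ?_
    have h := sum_exp hp hm
    have ho : (-1 : ℝ) ^ m ((), false) * (-1) ^ m ((), true) = -1 := by
      rw [← pow_add, h]; exact (Nat.not_even_iff_odd.1 hd).neg_one_pow
    rw [neg_re, neg_im, neg_pow w.re, neg_pow w.im]
    linear_combination (coeff m p * (w.re ^ m ((), false) * w.im ^ m ((), true))) * ho
  have := hev w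
  linarith

/-- Restriction of a polynomial to the line through the base point. -/
def resP (q : MvPolynomial (Fin 3 × Bool) ℝ) : MvPolynomial (Unit × Bool) ℝ :=
  aeval (fun t : Fin 3 × Bool => if t.1 = 0 then X ((), t.2) else 0) q

theorem evalR_resP (q : MvPolynomial (Fin 3 × Bool) ℝ) (w : ℂ) :
    evalR (resP q) (fun _ => w) = evalR q (emb w) := by
  rw [evalR, evalR, resP]
  rw [← coe_aeval_eq_eval, ← coe_aeval_eq_eval]
  change (aeval _) ((aeval _) q) = aeval _ q
  rw [← AlgHom.comp_apply, comp_aeval]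
  congr 2
  funext t
  obtain ⟨i, b⟩ := t
  fin_cases i <;> cases b <;> simp [emb]

theorem resP_hom {q : MvPolynomial (Fin 3 × Bool) ℝ} {d : ℕ} (hq : q.IsHomogeneous d) :
    (resP q).IsHomogeneous d := by
  have := hq.aeval (fun t : Fin 3 × Bool =>
    if t.1 = 0 then (X ((), t.2) : MvPolynomial (Unit × Bool) ℝ) else 0) (n := 1) (fun t => by
      split_ifs
      · exact isHomogeneous_X _ _
      · exact isHomogeneous_zero _ _ _)
  simpa [resP] using this

theorem neg_rot : ∃ g ∈ SO3, ∀ w, emb (-w) = act g (emb w) := by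
  refine ⟨!![-1, 0, 0; 0, -1, 0; 0, 0, 1], ⟨?_, ?_⟩, fun w => ?_⟩
  · ext i j; fin_cases i <;> fin_cases j <;> simp [Matrix.mul_apply, Fin.sum_univ_three]
  · simp [Matrix.det_fin_three]
  · ext i; rw [act_emb]; fin_cases i <;> simp [emb]

/-- The map `ℂ/± → M₀`. -/
def psi : Y → M₀ :=
  Quot.lift (fun w => Quot.mk relM ⟨emb w, emb_mem w⟩) (by
    rintro a b (rfl | rfl)
    · rfl
    · obtain ⟨g, hg, h⟩ := neg_rot
      exact Quot.sound ⟨g, hg, h a⟩)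

/-- The quadratic form on `ℂ³`. -/
def quad (z : Fin 3 → ℂ) : ℂ := ∑ i, z i ^ 2

theorem quad_act {g : Matrix (Fin 3) (Fin 3) ℝ} (hg : g ∈ SO3) (z : Fin 3 → ℂ) :
    quad (act g z) = quad z := by
  have key : ∀ z, quad z =
      ((evalR (dotP false false) z - evalR (dotP true true) z : ℝ) : ℂ) +
        2 * (evalR (dotP false true) z : ℝ) * I := by
    intro z
    simp only [quad, evalR_dotP, part, dotProduct, Fin.sum_univ_three]
    apply Complex.ext <;> simp [pow_two] <;> ring
  rw [key, key, dotP_inv _ _ hg, dotP_inv _ _ hg, dotP_inv _ _ hg]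

/-- The induced map on `M₀`. -/
def quadM : M₀ → ℂ :=
  Quot.lift (fun z : Mset => quad z) (by
    rintro a b ⟨g, hg, h⟩
    rw [h, quad_act hg])

theorem quadM_cont : Continuous quadM := by
  refine continuous_quot_lift _ ?_
  unfold quad
  refine continuous_finset_sum _ fun i _ => ?_
  exact ((continuous_apply i).comp continuous_subtype_val).pow 2

/-- Squaring on `Y`. -/
def sqY : Y → ℂ :=
  Quot.lift (fun w : ℂ => w ^ 2) (by rintro a b (rfl | rfl) <;> simp)

theorem sqY_cont : Continuous sqY := continuous_quot_lift _ (by fun_prop)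

theorem psi_cont : Continuous psi := by
  refine continuous_quot_lift _ ?_
  refine continuous_quot_mk.comp ?_
  refine Continuous.subtype_mk ?_ _
  unfold emb
  refine continuous_pi fun i => ?_
  fin_cases i <;> simp <;> fun_prop

theorem sqY_inj : Function.Injective sqY := by
  rintro ⟨a⟩ ⟨b⟩ h
  change a ^ 2 = b ^ 2 at h
  refine Quot.sound ?_
  rcases sq_eq_sq_iff_eq_or_eq_neg.1 h with h | h
  · exact Or.inl h.symm
  · right; rw [h, neg_neg]

theorem sqY_surj : Function.Surjective sqY := fun w => by
  obtain ⟨v, hv⟩ := IsAlgClosed.exists_pow_nat_eq w (n := 2) (by norm_num)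
  exact ⟨Quot.mk _ v, hv⟩

theorem sq_closed : IsClosedMap (fun w : ℂ => w ^ 2) := by
  have hp : IsProperMap (fun w : ℂ => w ^ 2) := by
    rw [isProperMap_iff_tendsto_cocompact]
    refine ⟨by fun_prop, ?_⟩
    rw [← Metric.cobounded_eq_cocompact, ← comap_norm_atTop (E := ℂ), Filter.tendsto_comap_iff]
    have : (norm ∘ fun w : ℂ => w ^ 2) = (fun x : ℝ => x ^ 2) ∘ norm := by
      ext w; simp
    rw [this]
    exact (Filter.tendsto_pow_atTop (by norm_num)).comp Filter.tendsto_comap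
  exact hp.isClosedMap

theorem sqY_closed : IsClosedMap sqY := by
  intro s hs
  have h1 : IsClosed ((Quot.mk relC : ℂ → Y) ⁻¹' s) := hs.preimage continuous_quot_mk
  have := sq_closed _ h1
  convert this using 1
  ext w
  constructor
  · rintro ⟨⟨a⟩, ha, rfl⟩
    exact ⟨a, ha, rfl⟩
  · rintro ⟨a, ha, rfl⟩
    exact ⟨Quot.mk _ a, ha, rfl⟩

/-- `Y` is homeomorphic to `ℂ` by squaring. -/
def sqHomeo : Y ≃ₜ ℂ :=
  (Equiv.ofBijective sqY ⟨sqY_inj, sqY_surj⟩).toHomeomorphOfContinuousClosed sqY_cont sqY_closed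

theorem quadM_psi (y : Y) : quadM (psi y) = sqY y := by
  obtain ⟨w⟩ := y
  change quad (emb w) = w ^ 2
  simp [quad, emb, Fin.sum_univ_three]

theorem psi_surj : Function.Surjective psi := by
  rintro ⟨z, hz⟩
  obtain ⟨g, hg, w, rfl⟩ := exists_rep hz
  exact ⟨Quot.mk _ w, Quot.sound ⟨g, hg, rfl⟩⟩

/-- The homeomorphism. -/
def chi : M₀ ≃ₜ Y where
  toFun m := sqHomeo.symm (quadM m)
  invFun := psi
  left_inv m := by
    obtain ⟨y, rfl⟩ := psi_surj m
    beta_reduce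
    rw [quadM_psi]
    congr 1
    exact sqHomeo.symm_apply_apply y
  right_inv y := by
    beta_reduce
    rw [quadM_psi]
    exact sqHomeo.symm_apply_apply y
  continuous_toFun := sqHomeo.symm.continuous.comp quadM_cont
  continuous_invFun := psi_cont

theorem chi_psi (y : Y) : chi (psi y) = y := chi.apply_symm_apply y

theorem psi_chi (m : M₀) : psi (chi m) = m := chi.symm_apply_apply m

theorem chi_mk {g : Matrix (Fin 3) (Fin 3) ℝ} (hg : g ∈ SO3) (w : ℂ)
    (hm : act g (emb w) ∈ Mset) :
    chi (Quot.mk relM ⟨act g (emb w), hm⟩) = Quot.mk relC w := by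
  have : (Quot.mk relM ⟨act g (emb w), hm⟩ : M₀) = psi (Quot.mk relC w) :=
    (Quot.sound ⟨g, hg, rfl⟩ : (Quot.mk relM ⟨emb w, emb_mem w⟩ : M₀) = _).symm
  exact (congrArg chi this).trans (chi_psi _)

/-- The symplectic quotient of R₂ admits a ℤ-graded regular diffeomorphism to `ℂ/{±1}`. -/
theorem graded_regular_diffeomorphism_R2_to_C_mod_pm1 :
    ∃ χ : M₀ ≃ₜ Y, ∀ d : ℕ, (fun f : Y → ℝ => f ∘ ⇑χ) '' RegY d = RegM d := by
  refine ⟨chi, fun d => Set.Subset.antisymm ?_ ?_⟩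
  · rintro _ ⟨f, ⟨p, hp, hev, hf⟩, rfl⟩
    by_cases hd : Even d
    · refine ⟨liftP p, liftP_hom hp hd, fun g hg z => liftP_inv p hg z, ?_⟩
      rintro ⟨z, hz⟩
      obtain ⟨g, hg, w, rfl⟩ := exists_rep hz
      change f (chi _) = _
      rw [chi_mk hg, hf, liftP_inv p hg, liftP_emb hp hd]
    · refine ⟨0, isHomogeneous_zero _ _ _, fun g _ z => by simp [evalR], ?_⟩
      rintro ⟨z, hz⟩
      obtain ⟨g, hg, w, rfl⟩ := exists_rep hz
      change f (chi _) = _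
      rw [chi_mk hg, hf, odd_zero hp hd hev]
      simp [evalR]
  · rintro f ⟨q, hq, hinv, hf⟩
    refine ⟨f ∘ psi, ⟨resP q, resP_hom hq, fun w => ?_, fun w => ?_⟩, ?_⟩
    · obtain ⟨g, hg, h⟩ := neg_rot
      rw [evalR_resP, evalR_resP, h, hinv g hg]
    · rw [evalR_resP]
      exact hf ⟨emb w, emb_mem w⟩
    · funext m
      change f (psi (chi m)) = f m
      rw [psi_chi]

end

end Stmt14
end
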